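/- Lower bound on Dirichlet boundary-crossing probabilities for all thresholds: Let m ≥ 1, b > 0, and let f : {0,…,m} → [0,b] satisfy f(0) = 0 and f(m) = b. Let α = (α_0,…,α_m) ∈ ℝ_{>0}^{m+1}, set ᾱ = Σ_{j=0}^m α_j and p̄(ℓ) = α_ℓ/ᾱ for ℓ = 0,…,m. Fix ε ∈ (0,1) and assume min(α_0, α_m) ≥ c₀·ε^{−2}. Define α⁺ = (α_0, α_1, …, α_{m−1}, α_m + 1). Then for every μ ∈ (0, b), P_{w ∼ Dir(α⁺)}( wf ≥ μ ) ≥ (1 − ε) · P_{ζ ∼ N(0,1)}( ζ ≥ √ᾱ · A(p̄, μ, f) ). -/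

import Mathlib

open MeasureTheory ProbabilityTheory Real Set
open scoped ENNReal

noncomputable section

/-- The absolute constant `c₀ = (2/π)(8 + 49√6/9)²`. -/
def c0 : ℝ := (2 / Real.pi) * (8 + 49 * Real.sqrt 6 / 9) ^ 2

/-- Unnormalized density of `Dir(α)` in the first `m` coordinates. -/
def dirichletDensity (m : ℕ) (α : Fin (m + 1) → ℝ) : (Fin m → ℝ) → ℝ :=
  Set.indicator {x | (∀ i, 0 ≤ x i) ∧ ∑ i, x i ≤ 1}
    (fun x => (∏ i : Fin m, x i ^ (α i.castSucc - 1)) * (1 - ∑ i, x i) ^ (α (Fin.last m) - 1))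

def dirichletBase (m : ℕ) (α : Fin (m + 1) → ℝ) : Measure (Fin m → ℝ) :=
  volume.withDensity fun x => ENNReal.ofReal (dirichletDensity m α x)

/-- The Dirichlet distribution `Dir(α)`, as the law of the vector
`(x₀, …, x_{m-1}, 1 - ∑ x_i)` on the simplex `Δ_m ⊆ ℝ^{m+1}`. -/
def dirichlet (m : ℕ) (α : Fin (m + 1) → ℝ) : Measure (Fin (m + 1) → ℝ) :=
  Measure.map (fun x : Fin m → ℝ => Fin.snoc x (1 - ∑ i, x i))
    ((dirichletBase m α Set.univ)⁻¹ • dirichletBase m α)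

/-- Kullback–Leibler divergence between finitely supported `p, q` (for `p ≪ q`). -/
def klReal {m : ℕ} (p q : Fin (m + 1) → ℝ) : ℝ :=
  ∑ i, if p i = 0 then 0 else p i * Real.log (p i / q i)

/-- `Kinf(p, μ, f) = inf { KL(p,q) : q ∈ Δ_m, qf ≥ μ }`. -/
def Kinf {m : ℕ} (p : Fin (m + 1) → ℝ) (μ : ℝ) (f : Fin (m + 1) → ℝ) : ℝ :=
  sInf {x | ∃ q ∈ stdSimplex ℝ (Fin (m + 1)),
    (∀ i, q i = 0 → p i = 0) ∧ μ ≤ ∑ i, f i * q i ∧ x = klReal p q}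

/-- `Kinf*(p, μ, f) = inf { KL(p,q) : q ∈ Δ_m, qf = μ }`. -/
def Kinfstar {m : ℕ} (p : Fin (m + 1) → ℝ) (μ : ℝ) (f : Fin (m + 1) → ℝ) : ℝ :=
  sInf {x | ∃ q ∈ stdSimplex ℝ (Fin (m + 1)),
    (∀ i, q i = 0 → p i = 0) ∧ (∑ i, f i * q i) = μ ∧ x = klReal p q}

/-- `A(p, μ, f) = sgn(μ - pf) √(2 Kinf*(p, μ, f))`. -/
def Afun {m : ℕ} (p : Fin (m + 1) → ℝ) (μ : ℝ) (f : Fin (m + 1) → ℝ) : ℝ :=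
  Real.sign (μ - ∑ ℓ, f ℓ * p ℓ) * Real.sqrt (2 * Kinfstar p μ f)

/-!
A `Dir(β)` vector is a vector of independent `Γ(β i, 1)` variables `Y i` divided by its sum, so
`wf ≥ μ` says that the linear form `S = ∑ i, x i * Y i` with `x i = f i - μ` is nonnegative.

Tilting the law of `Y` by `exp (l * S)` gives scaled gamma variables again. Choosing `l` so that the
tilted mean of `S` is a prescribed point, and comparing the characteristic function of the tilted,
centred form with a Gaussian one in Fourier's inversion formula, gives the saddle-point
approximation of the density of `S` at that point, with relative error at most `ε`.

Parametrize the thresholds by `l`, and let `r l` be the signed square root of twice the relative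
entropy of the tilt. The additional unit in the shape of the gamma variable with the largest
coefficient makes the saddle-point density of `S`, transported to the parameter `l`, at least the
derivative in `l` of the Gaussian distribution function at `r l` when `l > 0`, and at most that
derivative when `l < 0`. For `l ≥ 0`, the tail of `S` minus `1 - ε` times the Gaussian tail is
therefore antitone with limit zero. For `l ≤ 0`, the same argument bounds the distribution function
of `S` by `1 + ε` times the Gaussian one, which is at most `1 / 2` there. Finally, by convex
duality, `r l = √ᾱ * A` for the `l` at which the tilted mean vanishes.
-/

open Filter Topology

section CenteredGammaCharFun

/-- The logarithm of the characteristic function of a centred standard exponential variable;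
that of a centred `Γ(a, 1)` variable is `a` times as large. -/
def centeredExpCumulant (τ : ℝ) : ℂ := -Complex.log (1 - τ * Complex.I) - τ * Complex.I

lemma one_sub_ofReal_mul_I_mem_slitPlane (τ : ℝ) : 1 - (τ : ℂ) * Complex.I ∈ Complex.slitPlane := by
  left; simp

lemma one_sub_ofReal_mul_I_ne_zero (τ : ℝ) : 1 - (τ : ℂ) * Complex.I ≠ 0 :=
  Complex.slitPlane_ne_zero (one_sub_ofReal_mul_I_mem_slitPlane τ)

lemma one_le_norm_one_sub_ofReal_mul_I (τ : ℝ) : 1 ≤ ‖1 - (τ : ℂ) * Complex.I‖ := by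
  simpa using Complex.abs_re_le_norm (1 - (τ : ℂ) * Complex.I)

lemma continuous_centeredExpCumulant : Continuous centeredExpCumulant :=
  (Continuous.clog (by fun_prop) one_sub_ofReal_mul_I_mem_slitPlane).neg.sub (by fun_prop)

lemma centeredExpCumulant_re (τ : ℝ) : (centeredExpCumulant τ).re = -(log (1 + τ ^ 2) / 2) := by
  have hnorm : ‖1 - (τ : ℂ) * Complex.I‖ ^ 2 = 1 + τ ^ 2 := by
    rw [← Complex.normSq_eq_norm_sq, Complex.normSq_apply]
    simp [sq]
  rw [centeredExpCumulant, Complex.sub_re, Complex.neg_re, Complex.log_re, ← hnorm, log_pow]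
  simp

lemma hasDerivAt_centeredExpCumulant (τ : ℝ) :
    HasDerivAt centeredExpCumulant (-(τ / (1 - τ * Complex.I))) τ := by
  have hlin : HasDerivAt (fun t : ℝ => (t : ℂ) * Complex.I) Complex.I τ := by
    simpa using Complex.ofRealCLM.hasDerivAt.mul_const Complex.I
  refine (((hlin.const_sub 1).clog_real (one_sub_ofReal_mul_I_mem_slitPlane τ)).neg.sub
    hlin).congr_deriv ?_
  change -(-Complex.I / (1 - τ * Complex.I)) - Complex.I = _
  have hne := one_sub_ofReal_mul_I_ne_zero τ
  rw [neg_div, neg_neg, sub_eq_iff_eq_add, div_eq_iff hne, add_mul, neg_mul, div_mul_cancel₀ _ hne]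
  linear_combination (τ : ℂ) * Complex.I_sq

lemma norm_centeredExpCumulant_add_sq_div_two_le (τ : ℝ) :
    ‖centeredExpCumulant τ + τ ^ 2 / 2‖ ≤ |τ| ^ 3 := by
  have hderiv (x : ℝ) : HasDerivAt (fun t : ℝ => centeredExpCumulant t + (t : ℂ) ^ 2 / 2)
      (-(Complex.I * x ^ 2 / (1 - x * Complex.I))) x := by
    refine ((hasDerivAt_centeredExpCumulant x).add
      ((Complex.ofRealCLM.hasDerivAt.pow 2).div_const 2)).congr_deriv ?_
    have := one_sub_ofReal_mul_I_ne_zero x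
    simp only [Complex.ofRealCLM_apply, Complex.ofReal_one]
    field_simp
    push_cast
    ring
  have hbound (x : ℝ) (hx : x ∈ uIcc 0 τ) :
      ‖-(Complex.I * x ^ 2 / (1 - x * Complex.I))‖ ≤ |τ| ^ 2 := by
    have hxτ : |x| ≤ |τ| := by simpa using abs_sub_left_of_mem_uIcc hx
    rw [norm_neg, norm_div, norm_mul, Complex.norm_I, one_mul, norm_pow, Complex.norm_real]
    refine (div_le_self (by positivity) (one_le_norm_one_sub_ofReal_mul_I x)).trans ?_
    gcongr
    exact hxτ
  have hmvt := (convex_uIcc 0 τ).norm_image_sub_le_of_norm_hasDerivWithin_le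
    (fun x _ => (hderiv x).hasDerivWithinAt) hbound left_mem_uIcc right_mem_uIcc
  calc ‖centeredExpCumulant τ + τ ^ 2 / 2‖ ≤ |τ| ^ 2 * |τ| := by
        simpa [centeredExpCumulant] using hmvt
    _ = |τ| ^ 3 := by ring

variable {ι : Type*} [Fintype ι]

/-- The characteristic function of `∑ i, y i * (Y i - α i)`, where the `Y i` are independent,
`Y k ∼ Γ(α k + 1, 1)` and `Y i ∼ Γ(α i, 1)` for `i ≠ k`. -/
def centeredGammaCharFun (α y : ι → ℝ) (k : ι) (t : ℝ) : ℂ :=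
  Complex.exp (∑ i, α i * centeredExpCumulant (t * y i)) / (1 - (t * y k : ℝ) * Complex.I)

lemma continuous_centeredGammaCharFun (α y : ι → ℝ) (k : ι) :
    Continuous (centeredGammaCharFun α y k) := by
  have := continuous_centeredExpCumulant
  exact Continuous.div (by fun_prop) (by fun_prop) fun t => one_sub_ofReal_mul_I_ne_zero _

lemma centeredGammaCharFun_mul (α y : ι → ℝ) (k : ι) (s t : ℝ) :
    centeredGammaCharFun α y k (s * t) = centeredGammaCharFun α (fun i => s * y i) k t := by
  simp only [centeredGammaCharFun, mul_left_comm t, mul_assoc]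

-- The exponent `8 * y ^ 2 ≤ 1` makes this Bernoulli's inequality.
lemma eight_mul_sq_mul_log_le (t : ℝ) {y : ℝ} (hy : y ^ 2 ≤ 1 / 8) :
    8 * y ^ 2 * log (1 + t ^ 2 / 8) ≤ log (1 + (t * y) ^ 2) := by
  rw [← log_rpow (by positivity)]
  refine log_le_log (by positivity) ?_
  have hbern := rpow_one_add_le_one_add_mul_self (s := t ^ 2 / 8) (p := 8 * y ^ 2)
    (by linarith [sq_nonneg t]) (by positivity) (by linarith)
  exact hbern.trans_eq (by ring)

lemma re_sum_centeredExpCumulant_le {α y : ι → ℝ} (hα : ∀ i, 0 ≤ α i)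
    (hvar : ∑ i, α i * y i ^ 2 = 1) (hy : ∀ i, y i ^ 2 ≤ 1 / 8) (t : ℝ) :
    (∑ i, α i * centeredExpCumulant (t * y i)).re ≤ -(4 * log (1 + t ^ 2 / 8)) := by
  simp_rw [Complex.re_sum, Complex.re_ofReal_mul, centeredExpCumulant_re, mul_neg,
    Finset.sum_neg_distrib]
  refine neg_le_neg ?_
  calc 4 * log (1 + t ^ 2 / 8) = ∑ i, α i / 2 * (8 * y i ^ 2 * log (1 + t ^ 2 / 8)) := by
        rw [← one_mul (4 * _), ← hvar, Finset.sum_mul]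
        exact Finset.sum_congr rfl fun i _ => by ring
    _ ≤ ∑ i, α i * (log (1 + (t * y i) ^ 2) / 2) := by
        refine Finset.sum_le_sum fun i _ => ?_
        linarith [mul_le_mul_of_nonneg_left (eight_mul_sq_mul_log_le t (hy i)) (hα i)]

lemma exp_neg_four_mul_log {c : ℝ} (hc : 0 < c) : exp (-(4 * log c)) = (c ^ 4)⁻¹ := by
  rw [exp_neg, show (4 : ℝ) * log c = log (c ^ 4) by simp [log_pow], exp_log (by positivity)]

lemma norm_centeredGammaCharFun_le {α y : ι → ℝ} (hα : ∀ i, 0 ≤ α i)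
    (hvar : ∑ i, α i * y i ^ 2 = 1) (hy : ∀ i, y i ^ 2 ≤ 1 / 8) (k : ι) (t : ℝ) :
    ‖centeredGammaCharFun α y k t‖ ≤ ((1 + t ^ 2 / 8) ^ 4)⁻¹ := by
  rw [centeredGammaCharFun, norm_div, Complex.norm_exp, ← exp_neg_four_mul_log (by positivity)]
  refine (div_le_self (exp_pos _).le (one_le_norm_one_sub_ofReal_mul_I _)).trans ?_
  exact exp_le_exp.2 (re_sum_centeredExpCumulant_le hα hvar hy t)

lemma norm_sum_centeredExpCumulant_add_le {α y : ι → ℝ} {η : ℝ} (hα : ∀ i, 0 ≤ α i)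
    (hvar : ∑ i, α i * y i ^ 2 = 1) (hη : ∀ i, |y i| ≤ η) (t : ℝ) :
    ‖∑ i, α i * centeredExpCumulant (t * y i) + (t ^ 2 / 2 : ℝ)‖ ≤ η * |t| ^ 3 := by
  have hsplit : ∑ i, α i * centeredExpCumulant (t * y i) + (t ^ 2 / 2 : ℝ)
      = ∑ i, α i * (centeredExpCumulant (t * y i) + (t * y i : ℝ) ^ 2 / 2) := by
    rw [← one_mul (t ^ 2 / 2), ← hvar, Finset.sum_mul, Complex.ofReal_sum, ← Finset.sum_add_distrib]
    refine Finset.sum_congr rfl fun i _ => ?_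
    push_cast
    ring
  calc _ ≤ ∑ i, ‖α i * (centeredExpCumulant (t * y i) + ((t * y i : ℝ) : ℂ) ^ 2 / 2)‖ := by
        rw [hsplit]
        exact norm_sum_le _ _
    _ ≤ ∑ i, α i * y i ^ 2 * (η * |t| ^ 3) := by
      refine Finset.sum_le_sum fun i _ => ?_
      rw [norm_mul, Complex.norm_real, norm_of_nonneg (hα i), mul_assoc]
      refine mul_le_mul_of_nonneg_left ?_ (hα i)
      calc _ ≤ |t * y i| ^ 3 := norm_centeredExpCumulant_add_sq_div_two_le _
        _ = |y i| * (y i ^ 2 * |t| ^ 3) := by rw [abs_mul, mul_pow, ← sq_abs (y i)]; ring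
        _ ≤ η * (y i ^ 2 * |t| ^ 3) := by gcongr; exact hη i
        _ = y i ^ 2 * (η * |t| ^ 3) := by ring
    _ = η * |t| ^ 3 := by rw [← Finset.sum_mul, hvar, one_mul]

lemma norm_cexp_sub_cexp_le {z w : ℂ} {c : ℝ} (hz : z.re ≤ c) (hw : w.re ≤ c) :
    ‖Complex.exp z - Complex.exp w‖ ≤ exp c * ‖z - w‖ :=
  (convex_halfSpace_re_le c).norm_image_sub_le_of_norm_hasDerivWithin_le
    (fun x _ => (Complex.hasDerivAt_exp x).hasDerivWithinAt)
    (fun x hx => by rw [Complex.norm_exp]; exact exp_le_exp.2 hx) hw hz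

lemma abs_pow_three_add_abs_le (t : ℝ) : |t| ^ 3 + |t| ≤ 3 * √2 * (1 + t ^ 2 / 8) ^ 3 := by
  have hsq : √2 ^ 2 = 2 := sq_sqrt (by norm_num)
  have habs : |t| ≤ √2 * (1 + t ^ 2 / 8) := by
    nlinarith [sq_nonneg (|t| - 2 * √2), sq_abs t, abs_nonneg t, sqrt_nonneg 2]
  have hone : 1 + t ^ 2 / 8 ≤ (1 + t ^ 2 / 8) ^ 3 :=
    le_self_pow₀ (by linarith [sq_nonneg t]) (by norm_num)
  calc |t| ^ 3 + |t| ≤ (√2 * (1 + t ^ 2 / 8)) ^ 3 + √2 * (1 + t ^ 2 / 8) ^ 3 := by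
        gcongr
        exact habs.trans (by gcongr)
    _ = 3 * √2 * (1 + t ^ 2 / 8) ^ 3 := by
        linear_combination √2 * (1 + t ^ 2 / 8) ^ 3 * hsq

lemma norm_centeredGammaCharFun_sub_exp_le {α y : ι → ℝ} {η : ℝ} (hα : ∀ i, 0 ≤ α i)
    (hvar : ∑ i, α i * y i ^ 2 = 1) (hη : ∀ i, |y i| ≤ η) (hη8 : η ^ 2 ≤ 1 / 8) (k : ι) (t : ℝ) :
    ‖centeredGammaCharFun α y k t - (exp (-(t ^ 2 / 2)) : ℝ)‖ ≤
      3 * √2 * η * (1 + t ^ 2 / 8)⁻¹ := by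
  have hη0 : 0 ≤ η := (abs_nonneg _).trans (hη k)
  have hy (i : ι) : y i ^ 2 ≤ 1 / 8 := (sq_le_sq.2 ((hη i).trans (le_abs_self η))).trans hη8
  set L := ∑ i, α i * centeredExpCumulant (t * y i)
  set D := 1 - ((t * y k : ℝ) : ℂ) * Complex.I with hD
  set c := -(4 * log (1 + t ^ 2 / 8))
  have hLre : L.re ≤ c := re_sum_centeredExpCumulant_le hα hvar hy t
  have hgauss : ((-(t ^ 2 / 2) : ℝ) : ℂ).re ≤ c := by
    rw [Complex.ofReal_re]
    linarith [log_le_sub_one_of_pos (show (0 : ℝ) < 1 + t ^ 2 / 8 by positivity)]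
  have hexponent : ‖Complex.exp L - (exp (-(t ^ 2 / 2)) : ℝ)‖ ≤ exp c * (η * |t| ^ 3) := by
    rw [Complex.ofReal_exp]
    refine (norm_cexp_sub_cexp_le hLre hgauss).trans ?_
    gcongr
    simpa using norm_sum_centeredExpCumulant_add_le hα hvar hη t
  have hextra : ‖Complex.exp L / D - Complex.exp L‖ ≤ exp c * (η * |t|) := by
    have hDne : D ≠ 0 := one_sub_ofReal_mul_I_ne_zero _
    rw [show Complex.exp L / D - Complex.exp L
      = Complex.exp L * (((t * y k : ℝ) : ℂ) * Complex.I) / D by rw [hD] at *; field_simp; ring]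
    rw [norm_div, norm_mul, norm_mul, Complex.norm_exp, Complex.norm_I, Complex.norm_real, mul_one,
      norm_mul, mul_comm ‖t‖]
    refine (div_le_self (by positivity) (one_le_norm_one_sub_ofReal_mul_I _)).trans ?_
    gcongr
    exacts [hη k, (norm_eq_abs t).le]
  calc ‖Complex.exp L / D - (exp (-(t ^ 2 / 2)) : ℝ)‖
      ≤ exp c * (η * |t|) + exp c * (η * |t| ^ 3) :=
        (norm_sub_le_norm_sub_add_norm_sub _ (Complex.exp L) _).trans (add_le_add hextra hexponent)
    _ = η * (|t| ^ 3 + |t|) * exp c := by ring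
    _ ≤ η * (3 * √2 * (1 + t ^ 2 / 8) ^ 3) * exp c := by
        gcongr
        exact abs_pow_three_add_abs_le t
    _ = 3 * √2 * η * (1 + t ^ 2 / 8)⁻¹ := by
        have : 1 + t ^ 2 / 8 ≠ 0 := by positivity
        rw [exp_neg_four_mul_log (by positivity)]
        field_simp

lemma integral_inv_one_add_sq_div_eight : ∫ t : ℝ, (1 + t ^ 2 / 8)⁻¹ = 2 * √2 * π := by
  have hsq : √2 ^ 2 = 2 := sq_sqrt (by norm_num)
  have hscale (t : ℝ) : (1 + t ^ 2 / 8)⁻¹ = (1 + ((2 * √2)⁻¹ * t) ^ 2)⁻¹ := by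
    rw [mul_pow, inv_pow, mul_pow, hsq]
    ring_nf
  simp_rw [hscale]
  rw [Measure.integral_comp_mul_left (fun u : ℝ => (1 + u ^ 2)⁻¹), integral_univ_inv_one_add_sq,
    inv_inv, abs_of_pos (by positivity), smul_eq_mul]

lemma integrable_inv_one_add_sq_div_eight : Integrable fun t : ℝ => (1 + t ^ 2 / 8)⁻¹ :=
  .of_integral_ne_zero (by rw [integral_inv_one_add_sq_div_eight]; positivity)

lemma integrable_centeredGammaCharFun_of_sum_eq_one {α y : ι → ℝ} {η : ℝ} (hα : ∀ i, 0 ≤ α i)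
    (hvar : ∑ i, α i * y i ^ 2 = 1) (hη : ∀ i, |y i| ≤ η) (hη8 : η ^ 2 ≤ 1 / 8) (k : ι) :
    Integrable (centeredGammaCharFun α y k) := by
  have hy (i : ι) : y i ^ 2 ≤ 1 / 8 := (sq_le_sq.2 ((hη i).trans (le_abs_self η))).trans hη8
  refine integrable_inv_one_add_sq_div_eight.mono'
    (continuous_centeredGammaCharFun α y k).aestronglyMeasurable (.of_forall fun t => ?_)
  refine (norm_centeredGammaCharFun_le hα hvar hy k t).trans (inv_anti₀ (by positivity) ?_)
  exact le_self_pow₀ (by linarith [sq_nonneg t]) (by norm_num)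

lemma abs_re_integral_centeredGammaCharFun_sub_le_of_sum_eq_one {α y : ι → ℝ} {η : ℝ}
    (hα : ∀ i, 0 ≤ α i) (hvar : ∑ i, α i * y i ^ 2 = 1) (hη : ∀ i, |y i| ≤ η)
    (hη8 : η ^ 2 ≤ 1 / 8) (k : ι) :
    |(∫ t, centeredGammaCharFun α y k t).re - √(2 * π)| ≤ 12 * π * η := by
  have hgauss (t : ℝ) : exp (-(t ^ 2 / 2)) = exp (-(1 / 2) * t ^ 2) := by ring_nf
  have hint : Integrable fun t : ℝ => exp (-(t ^ 2 / 2)) := by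
    simp_rw [hgauss]
    exact integrable_exp_neg_mul_sq (by norm_num)
  have hval : ∫ t : ℝ, exp (-(t ^ 2 / 2)) = √(2 * π) := by
    simp_rw [hgauss, integral_gaussian]
    ring_nf
  have hdiff : (∫ t, centeredGammaCharFun α y k t) - (√(2 * π) : ℝ)
      = ∫ t, (centeredGammaCharFun α y k t - (exp (-(t ^ 2 / 2)) : ℝ)) := by
    rw [← hval, ← integral_complex_ofReal]
    exact (integral_sub (integrable_centeredGammaCharFun_of_sum_eq_one hα hvar hη hη8 k)
      hint.ofReal).symm
  calc _ = |((∫ t, centeredGammaCharFun α y k t) - (√(2 * π) : ℝ)).re| := by simp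
    _ ≤ ‖(∫ t, centeredGammaCharFun α y k t) - (√(2 * π) : ℝ)‖ := Complex.abs_re_le_norm _
    _ ≤ ∫ t, 3 * √2 * η * (1 + t ^ 2 / 8)⁻¹ := hdiff ▸
        norm_integral_le_of_norm_le (integrable_inv_one_add_sq_div_eight.const_mul _)
          (.of_forall (norm_centeredGammaCharFun_sub_exp_le hα hvar hη hη8 k))
    _ = 12 * π * η := by
        rw [integral_const_mul, integral_inv_one_add_sq_div_eight]
        linear_combination 6 * η * π * mul_self_sqrt (show (0 : ℝ) ≤ 2 by norm_num)

lemma centeredGammaCharFun_eq_comp_mul (α y : ι → ℝ) (k : ι) {s : ℝ} (hs : s ≠ 0) :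
    centeredGammaCharFun α y k =
      fun t => centeredGammaCharFun α (fun i => s⁻¹ * y i) k (s * t) := by
  funext t
  simp_rw [centeredGammaCharFun_mul, mul_inv_cancel_left₀ hs]

lemma sum_mul_inv_mul_sq_eq_one {α y : ι → ℝ} {s : ℝ} (hs : s ≠ 0)
    (hvar : ∑ i, α i * y i ^ 2 = s ^ 2) : ∑ i, α i * (s⁻¹ * y i) ^ 2 = 1 := by
  simp_rw [mul_pow, mul_left_comm (α _), ← Finset.mul_sum, hvar]
  field_simp

lemma abs_inv_mul_le {y s η : ℝ} (hs : 0 < s) (hy : |y| ≤ η * s) : |s⁻¹ * y| ≤ η := by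
  rwa [abs_mul, abs_of_pos (inv_pos.2 hs), inv_mul_le_iff₀ hs, mul_comm]

lemma integrable_centeredGammaCharFun {α y : ι → ℝ} {s η : ℝ} (hα : ∀ i, 0 ≤ α i) (hs : 0 < s)
    (hvar : ∑ i, α i * y i ^ 2 = s ^ 2) (hη : ∀ i, |y i| ≤ η * s) (hη8 : η ^ 2 ≤ 1 / 8) (k : ι) :
    Integrable (centeredGammaCharFun α y k) := by
  rw [centeredGammaCharFun_eq_comp_mul α y k hs.ne']
  exact (integrable_centeredGammaCharFun_of_sum_eq_one hα (sum_mul_inv_mul_sq_eq_one hs.ne' hvar)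
    (fun i => abs_inv_mul_le hs (hη i)) hη8 k).comp_mul_left' hs.ne'

lemma abs_re_integral_centeredGammaCharFun_sub_le {α y : ι → ℝ} {s η : ℝ} (hα : ∀ i, 0 ≤ α i)
    (hs : 0 < s) (hvar : ∑ i, α i * y i ^ 2 = s ^ 2) (hη : ∀ i, |y i| ≤ η * s)
    (hη8 : η ^ 2 ≤ 1 / 8) (k : ι) :
    |(∫ t, centeredGammaCharFun α y k t).re - √(2 * π) / s| ≤ 12 * π * η / s := by
  have hunit := abs_re_integral_centeredGammaCharFun_sub_le_of_sum_eq_one hα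
    (sum_mul_inv_mul_sq_eq_one hs.ne' hvar) (fun i => abs_inv_mul_le hs (hη i)) hη8 k
  rw [centeredGammaCharFun_eq_comp_mul α y k hs.ne',
    Measure.integral_comp_mul_left (centeredGammaCharFun α (fun i => s⁻¹ * y i) k),
    abs_of_pos (inv_pos.2 hs), Complex.smul_re, smul_eq_mul, inv_mul_eq_div, ← sub_div, abs_div,
    abs_of_pos hs]
  gcongr

end CenteredGammaCharFun

section GammaMeasure

lemma measurable_gammaPDF (a r : ℝ) : Measurable (gammaPDF a r) :=
  (measurable_gammaPDFReal a r).ennreal_ofReal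

lemma integral_gammaMeasure {E : Type*} [NormedAddCommGroup E] [NormedSpace ℝ E] {a r : ℝ}
    (ha : 0 < a) (hr : 0 < r) (g : ℝ → E) :
    ∫ y, g y ∂gammaMeasure a r = ∫ y, gammaPDFReal a r y • g y := by
  rw [gammaMeasure, integral_withDensity_eq_integral_toReal_smul (measurable_gammaPDF a r)
    (by simp [gammaPDF])]
  simp_rw [gammaPDF, ENNReal.toReal_ofReal (gammaPDFReal_nonneg ha hr _)]

lemma integral_gammaPDFReal {a r : ℝ} (ha : 0 < a) (hr : 0 < r) :
    ∫ y, gammaPDFReal a r y = 1 := by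
  have := isProbabilityMeasure_gammaMeasure ha hr
  simpa using (integral_gammaMeasure ha hr fun _ => (1 : ℝ)).symm

lemma gammaPDFReal_one_mul_exp {a l : ℝ} (hl : l < 1) (y : ℝ) :
    gammaPDFReal a 1 y * exp (l * y) = (1 - l) ^ (-a) * gammaPDFReal a (1 - l) y := by
  have hpos : 0 < 1 - l := sub_pos.2 hl
  simp only [gammaPDFReal]
  split_ifs
  · rw [one_rpow, rpow_neg hpos.le, mul_assoc, ← exp_add,
      show -(1 * y) + l * y = -((1 - l) * y) by ring]
    have := (rpow_pos_of_pos hpos a).ne'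
    field_simp
  · simp

lemma mgf_id_gammaMeasure_one {a l : ℝ} (ha : 0 < a) (hl : l < 1) :
    mgf id (gammaMeasure a 1) l = (1 - l) ^ (-a) := by
  rw [mgf, integral_gammaMeasure ha one_pos]
  simp_rw [id_eq, smul_eq_mul, gammaPDFReal_one_mul_exp hl]
  rw [integral_const_mul, integral_gammaPDFReal ha (sub_pos.2 hl), mul_one]

lemma Iio_one_subset_interior_integrableExpSet_gammaMeasure {a : ℝ} (ha : 0 < a) :
    Iio 1 ⊆ interior (integrableExpSet id (gammaMeasure a 1)) := by
  refine isOpen_Iio.subset_interior_iff.2 fun l hl => .of_integral_ne_zero ?_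
  exact (mgf_id_gammaMeasure_one ha hl).trans_ne (rpow_pos_of_pos (sub_pos.2 hl) _).ne'

lemma integral_cexp_mul_gammaMeasure_one {a : ℝ} (ha : 0 < a) {z : ℂ} (hz : z.re < 1) :
    ∫ y, Complex.exp (z * y) ∂gammaMeasure a 1 = (1 - z) ^ (-a : ℂ) := by
  have hmgf : AnalyticOnNhd ℂ (complexMGF id (gammaMeasure a 1)) {z | z.re < 1} :=
    analyticOnNhd_complexMGF.mono fun z hz =>
      Iio_one_subset_interior_integrableExpSet_gammaMeasure ha hz
  have hpow : AnalyticOnNhd ℂ (fun z : ℂ => (1 - z) ^ (-a : ℂ)) {z | z.re < 1} := by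
    refine DifferentiableOn.analyticOnNhd (fun z hz => ?_)
      (isOpen_lt Complex.continuous_re continuous_const)
    refine (DifferentiableAt.cpow_const (by fun_prop) (.inl ?_)).differentiableWithinAt
    simpa using hz
  have hreal (l : ℝ) (hl : l < 1) :
      complexMGF id (gammaMeasure a 1) l = (1 - l : ℂ) ^ (-a : ℂ) := by
    rw [complexMGF_ofReal, mgf_id_gammaMeasure_one ha hl, Complex.ofReal_cpow (sub_pos.2 hl).le]
    push_cast
    rfl
  have hfreq : ∃ᶠ z in 𝓝[≠] (0 : ℂ), complexMGF id (gammaMeasure a 1) z = (1 - z) ^ (-a : ℂ) := by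
    have hlim : Tendsto ((↑) : ℝ → ℂ) (𝓝[≠] 0) (𝓝[≠] 0) :=
      Complex.continuous_ofReal.continuousWithinAt.tendsto_nhdsWithin fun l hl => by simpa using hl
    refine hlim.frequently (Eventually.frequently ?_)
    filter_upwards [nhdsWithin_le_nhds (Iio_mem_nhds one_pos)] with l hl using hreal l hl
  exact hmgf.eqOn_of_preconnected_of_frequently_eq hpow
    (convex_halfSpace_re_lt 1).isPreconnected (z₀ := 0) (by simp) hfreq hz

lemma map_const_mul_gammaMeasure {a r c : ℝ} (ha : 0 < a) (hr : 0 < r) (hc : 0 < c) :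
    (gammaMeasure a r).map (c * ·) = gammaMeasure a (r / c) := by
  have hpdf (y : ℝ) : gammaPDF a (r / c) (c * y) = ENNReal.ofReal c⁻¹ * gammaPDF a r y := by
    rw [gammaPDF, gammaPDF, ← ENNReal.ofReal_mul (by positivity), gammaPDFReal, gammaPDFReal]
    congr 1
    simp only [mul_nonneg_iff_of_pos_left hc]
    split_ifs with hy
    · rw [div_rpow hr.le hc.le, mul_rpow hc.le hy, rpow_sub_one hc.ne']
      have : c ^ a ≠ 0 := (rpow_pos_of_pos hc a).ne'
      field_simp
    · simp
  refine Measure.ext_of_lintegral _ fun g hg => ?_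
  have hscale : ∫⁻ v, (gammaPDF a (r / c) * g) v
      = ENNReal.ofReal |c| * ∫⁻ y, (gammaPDF a (r / c) * g) (c * y) := by
    conv_lhs => rw [← Real.smul_map_volume_mul_left hc.ne']
    rw [lintegral_smul_measure, smul_eq_mul,
      lintegral_map ((measurable_gammaPDF a _).mul hg) (measurable_const_mul c)]
  rw [lintegral_map hg (measurable_const_mul c), gammaMeasure, gammaMeasure,
    lintegral_withDensity_eq_lintegral_mul _ (measurable_gammaPDF a r)
      (g := fun y => g (c * y)) (hg.comp (measurable_const_mul c)),
    lintegral_withDensity_eq_lintegral_mul _ (measurable_gammaPDF a _) hg, hscale,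
    ← lintegral_const_mul' _ _ ENNReal.ofReal_ne_top]
  refine lintegral_congr fun y => ?_
  simp only [Pi.mul_apply, hpdf]
  rw [← mul_assoc, ← mul_assoc, ← ENNReal.ofReal_mul (abs_nonneg c), abs_of_pos hc,
    mul_inv_cancel₀ hc.ne', ENNReal.ofReal_one, one_mul]

lemma gammaPDFReal_eq_max {a : ℝ} (ha : 1 < a) (r y : ℝ) :
    gammaPDFReal a r y = r ^ a / Gamma a * (max y 0 ^ (a - 1) * exp (-(r * max y 0))) := by
  rw [gammaPDFReal]
  split_ifs with hy
  · rw [max_eq_left hy, mul_assoc]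
  · rw [max_eq_right (not_le.1 hy).le, zero_rpow (by linarith), zero_mul, mul_zero]

lemma continuous_gammaPDFReal {a : ℝ} (ha : 1 < a) (r : ℝ) : Continuous (gammaPDFReal a r) := by
  rw [funext (gammaPDFReal_eq_max ha r)]
  have : Continuous fun y : ℝ => max y 0 ^ (a - 1) :=
    (continuous_id.max continuous_const).rpow_const fun _ => Or.inr (by linarith)
  fun_prop

lemma rpow_mul_exp_neg_mul_le {c r w : ℝ} (hc : 0 < c) (hr : 0 < r) (hw : 0 ≤ w) :
    w ^ c * exp (-(r * w)) ≤ (c / r) ^ c := by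
  have hexp : (r * w / c) ^ c ≤ exp (r * w / c) ^ c :=
    rpow_le_rpow (by positivity) (by linarith [add_one_le_exp (r * w / c)]) hc.le
  rw [← exp_mul, div_mul_cancel₀ _ hc.ne', mul_comm r w, mul_div_assoc, mul_rpow hw (by positivity),
    ← inv_div, inv_rpow (by positivity), ← div_eq_mul_inv, div_le_iff₀ (by positivity)] at hexp
  rw [exp_neg, ← div_eq_mul_inv, div_le_iff₀ (exp_pos _)]
  linarith [mul_comm r w ▸ hexp]

lemma exists_forall_gammaPDFReal_le {a r : ℝ} (ha : 1 < a) (hr : 0 < r) :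
    ∃ C, ∀ y, gammaPDFReal a r y ≤ C := by
  refine ⟨r ^ a / Gamma a * ((a - 1) / r) ^ (a - 1), fun y => ?_⟩
  rw [gammaPDFReal_eq_max ha]
  have := Gamma_pos_of_pos (zero_lt_one.trans ha)
  gcongr
  exact rpow_mul_exp_neg_mul_le (sub_pos.2 ha) hr (le_max_right _ _)

end GammaMeasure

section GammaProduct

variable {ι : Type*} [Fintype ι]

/-- The joint law of independent variables `Y i ∼ Γ(a i, 1)`. -/
def gammaPi (a : ι → ℝ) : Measure (ι → ℝ) := Measure.pi fun i => gammaMeasure (a i) 1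

lemma isProbabilityMeasure_gammaPi {a : ι → ℝ} (ha : ∀ i, 0 < a i) :
    IsProbabilityMeasure (gammaPi a) := by
  have := fun i => isProbabilityMeasure_gammaMeasure (ha i) one_pos
  rw [gammaPi]
  infer_instance

lemma integral_cexp_mul_sum_gammaPi {a x : ι → ℝ} (ha : ∀ i, 0 < a i) {z : ℂ}
    (hz : ∀ i, z.re * x i < 1) :
    ∫ y, Complex.exp (z * (∑ i, x i * y i : ℝ)) ∂gammaPi a = ∏ i, (1 - z * x i) ^ (-a i : ℂ) := by
  have := fun i => isProbabilityMeasure_gammaMeasure (ha i) one_pos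
  have hprod (y : ι → ℝ) : Complex.exp (z * (∑ i, x i * y i : ℝ))
      = ∏ i, Complex.exp (z * x i * y i) := by
    rw [← Complex.exp_sum, Complex.ofReal_sum, Finset.mul_sum]
    simp_rw [Complex.ofReal_mul, mul_assoc]
  simp_rw [hprod, gammaPi]
  rw [integral_fintype_prod_eq_prod (μ := fun i => gammaMeasure (a i) 1)
    (fun i (t : ℝ) => Complex.exp (z * x i * t))]
  exact Finset.prod_congr rfl fun i _ =>
    integral_cexp_mul_gammaMeasure_one (ha i) (by simpa using hz i)

lemma one_sub_mul_ofReal_ne_zero {z : ℂ} {x : ℝ} (hz : z.re * x < 1) : 1 - z * x ≠ 0 := fun h => by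
  have := congrArg Complex.re h
  simp only [Complex.sub_re, Complex.one_re, Complex.re_mul_ofReal, Complex.zero_re] at this
  linarith

lemma integrable_cexp_mul_sum_gammaPi {a x : ι → ℝ} (ha : ∀ i, 0 < a i) {z : ℂ}
    (hz : ∀ i, z.re * x i < 1) :
    Integrable (fun y : ι → ℝ => Complex.exp (z * (∑ i, x i * y i : ℝ))) (gammaPi a) := by
  refine .of_integral_ne_zero ?_
  rw [integral_cexp_mul_sum_gammaPi ha hz, Finset.prod_ne_zero_iff]
  exact fun i _ => Complex.cpow_ne_zero_iff.2 (.inl (one_sub_mul_ofReal_ne_zero (hz i)))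

end GammaProduct

section LinearFormDensity

lemma conv_withDensity (ν : Measure ℝ) [SFinite ν] {κ : ℝ → ℝ≥0∞} (hκ : Measurable κ) :
    ν.conv (volume.withDensity κ) = volume.withDensity fun v => ∫⁻ x, κ (v - x) ∂ν := by
  refine Measure.ext_of_lintegral _ fun g hg => ?_
  have hswap : AEMeasurable (Function.uncurry fun x v => κ (v - x) * g v) (ν.prod volume) := by
    dsimp only [Function.uncurry_def]
    fun_prop
  rw [Measure.lintegral_conv hg, lintegral_withDensity_eq_lintegral_mul _ (by fun_prop) hg]
  calc ∫⁻ x, ∫⁻ z, g (x + z) ∂volume.withDensity κ ∂ν = ∫⁻ x, (∫⁻ v, κ (v - x) * g v) ∂ν := by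
        refine lintegral_congr fun x => ?_
        rw [lintegral_withDensity_eq_lintegral_mul _ hκ (by fun_prop),
          ← lintegral_add_left_eq_self (fun v => κ (v - x) * g v) x]
        simp
    _ = ∫⁻ v, (∫⁻ x, κ (v - x) * g v ∂ν) := lintegral_lintegral_swap hswap
    _ = ∫⁻ v, ((fun v => ∫⁻ x, κ (v - x) ∂ν) * g) v := by
        refine lintegral_congr fun v => ?_
        rw [lintegral_mul_const _ (by fun_prop), Pi.mul_apply]

variable {ι : Type*} [Fintype ι] [DecidableEq ι] {a x : ι → ℝ} {k : ι}

/-- The density of `∑ i, x i * Y i` for independent `Y i ∼ Γ(a i, 1)`, obtained by conditioning on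
all the variables but `Y k`. -/
def linearFormDensity (a x : ι → ℝ) (k : ι) (v : ℝ) : ℝ :=
  ∫ y, gammaPDFReal (a k) (x k)⁻¹ (v - ∑ i ∈ Finset.univ.erase k, x i * y i) ∂gammaPi a

lemma linearFormDensity_nonneg (hak : 0 < a k) (hxk : 0 < x k) (v : ℝ) :
    0 ≤ linearFormDensity a x k v :=
  integral_nonneg fun _ => gammaPDFReal_nonneg hak (inv_pos.2 hxk) _

lemma continuous_linearFormDensity (ha : ∀ i, 0 < a i) (hak : 1 < a k) (hxk : 0 < x k) :
    Continuous (linearFormDensity a x k) := by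
  obtain ⟨C, hC⟩ := exists_forall_gammaPDFReal_le hak (inv_pos.2 hxk)
  have hcont := continuous_gammaPDFReal hak (x k)⁻¹
  have := isProbabilityMeasure_gammaPi ha
  refine continuous_of_dominated (bound := fun _ => C) (fun v => ?_)
    (fun v => .of_forall fun y => ?_) (integrable_const C) (.of_forall fun y => by fun_prop)
  · exact Continuous.aestronglyMeasurable (by fun_prop)
  · rw [norm_of_nonneg (gammaPDFReal_nonneg (ha k) (inv_pos.2 hxk) _)]
    exact hC _

lemma ofReal_linearFormDensity (ha : ∀ i, 0 < a i) (hak : 1 < a k) (hxk : 0 < x k) (v : ℝ) :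
    ENNReal.ofReal (linearFormDensity a x k v) =
      ∫⁻ y, gammaPDF (a k) (x k)⁻¹ (v - ∑ i ∈ Finset.univ.erase k, x i * y i) ∂gammaPi a := by
  obtain ⟨C, hC⟩ := exists_forall_gammaPDFReal_le hak (inv_pos.2 hxk)
  have hcont := continuous_gammaPDFReal hak (x k)⁻¹
  have hnonneg := gammaPDFReal_nonneg (ha k) (inv_pos.2 hxk)
  have := isProbabilityMeasure_gammaPi ha
  refine ofReal_integral_eq_lintegral_ofReal (.mono' (integrable_const C)
    (Continuous.aestronglyMeasurable (by fun_prop)) (.of_forall fun y => ?_))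
    (.of_forall fun _ => hnonneg _)
  rw [norm_of_nonneg (hnonneg _)]
  exact hC _

lemma map_sum_gammaPi (ha : ∀ i, 0 < a i) (hak : 1 < a k) (hxk : 0 < x k) :
    (gammaPi a).map (fun y => ∑ i, x i * y i) =
      volume.withDensity fun v => ENNReal.ofReal (linearFormDensity a x k v) := by
  have := fun i => isProbabilityMeasure_gammaMeasure (ha i) one_pos
  have := isProbabilityMeasure_gammaPi ha
  let rest : (ι → ℝ) → ℝ := fun y => ∑ i ∈ Finset.univ.erase k, x i * y i
  have hrest : Measurable rest := by fun_prop
  have hindep : rest ⟂ᵢ[gammaPi a] (fun y => x k * y k) := by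
    have hpi : iIndepFun (fun i (y : ι → ℝ) => x i * y i) (gammaPi a) :=
      iIndepFun_pi (X := fun i t => x i * t) fun i => by fun_prop
    have hrest_eq : rest = ∑ i ∈ Finset.univ.erase k, fun y => x i * y i := by
      funext y
      simp only [rest, Finset.sum_apply]
    rw [hrest_eq]
    exact hpi.indepFun_finsetSum_of_notMem (fun i => by fun_prop) (Finset.notMem_erase k _)
  have hterm : (gammaPi a).map (fun y => x k * y k)
      = volume.withDensity (gammaPDF (a k) (x k)⁻¹) := by
    rw [← gammaMeasure, ← one_div, ← map_const_mul_gammaMeasure (ha k) one_pos hxk,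
      ← (measurePreserving_eval (fun i => gammaMeasure (a i) 1) k).map_eq,
      Measure.map_map (by fun_prop) (by fun_prop)]
    rfl
  have hsum : (fun y : ι → ℝ => ∑ i, x i * y i) = rest + fun y => x k * y k := by
    funext y
    exact (Finset.sum_erase_add _ _ (Finset.mem_univ k)).symm
  have hpdf := measurable_gammaPDF (a k) (x k)⁻¹
  rw [hsum, hindep.map_add_eq_map_conv_map hrest (by fun_prop), hterm, conv_withDensity _ hpdf]
  simp_rw [ofReal_linearFormDensity ha hak hxk]
  congr 1
  funext v
  exact lintegral_map (hpdf.comp (measurable_const.sub measurable_id)) hrest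

end LinearFormDensity

section Inversion

open scoped FourierTransform

lemma eq_integral_of_integral_cexp_mul_eq {f Ψ : ℝ → ℂ} {V : ℝ} (hf : Integrable f)
    (hfc : ContinuousAt f V) (hΨ : Integrable Ψ)
    (h : ∀ t : ℝ, ∫ v : ℝ, Complex.exp (t * v * Complex.I) * f v
      = Ψ t * Complex.exp (t * V * Complex.I)) :
    f V = (2 * π : ℂ)⁻¹ * ∫ t, Ψ t := by
  have hF : 𝓕 f = fun ξ : ℝ => Ψ (-(2 * π) * ξ) * Complex.exp (((-(2 * π) * ξ * V : ℝ) : ℂ)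
      * Complex.I) := by
    ext ξ
    rw [Real.fourier_real_eq_integral_exp_smul, Complex.ofReal_mul _ V, ← h]
    refine integral_congr_ae (.of_forall fun v => ?_)
    simp only [smul_eq_mul]
    push_cast
    ring_nf
  have hΨ' : Integrable fun ξ : ℝ => Ψ (-(2 * π) * ξ) :=
    hΨ.comp_mul_left' (neg_ne_zero.2 two_pi_pos.ne')
  have hFi : Integrable (𝓕 f) := by
    rw [hF]
    refine hΨ'.mono (hΨ'.aestronglyMeasurable.mul (Continuous.aestronglyMeasurable (by fun_prop)))
      (.of_forall fun ξ => ?_)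
    rw [norm_mul, Complex.norm_exp_ofReal_mul_I, mul_one]
  have hcancel (ξ : ℝ) : Complex.exp (((2 * π * inner ℝ ξ V : ℝ) : ℂ) * Complex.I) •
      (Ψ (-(2 * π) * ξ) * Complex.exp (((-(2 * π) * ξ * V : ℝ) : ℂ) * Complex.I))
      = Ψ (-(2 * π) * ξ) := by
    rw [smul_eq_mul, mul_left_comm, ← Complex.exp_add]
    convert mul_one _
    rw [← Complex.exp_zero]
    congr 1
    simp only [RCLike.inner_apply, conj_trivial]
    push_cast
    ring
  rw [← hf.fourierInv_fourier_eq hFi hfc, Real.fourierInv_eq', hF]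
  simp_rw [hcancel]
  rw [Measure.integral_comp_mul_left, abs_inv, abs_neg, abs_of_pos two_pi_pos, Complex.real_smul]
  push_cast
  rfl

end Inversion

section LinearFormExpectation

variable {ι : Type*} [Fintype ι] [DecidableEq ι] {a x : ι → ℝ} {k : ι}

lemma integral_mul_linearFormDensity (ha : ∀ i, 0 < a i) (hak : 1 < a k) (hxk : 0 < x k)
    {g : ℝ → ℂ} (hg : Continuous g) :
    ∫ v, g v * linearFormDensity a x k v = ∫ y, g (∑ i, x i * y i) ∂gammaPi a := by
  rw [← integral_map (φ := fun y : ι → ℝ => ∑ i, x i * y i)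
    (Continuous.aemeasurable (by fun_prop)) hg.aestronglyMeasurable, map_sum_gammaPi ha hak hxk,
    integral_withDensity_eq_integral_toReal_smul
      (continuous_linearFormDensity ha hak hxk).measurable.ennreal_ofReal (by simp)]
  simp_rw [ENNReal.toReal_ofReal (linearFormDensity_nonneg (ha k) hxk _), Complex.real_smul,
    mul_comm]

lemma integrable_mul_linearFormDensity (ha : ∀ i, 0 < a i) (hak : 1 < a k) (hxk : 0 < x k)
    {g : ℝ → ℂ} (hg : Continuous g)
    (hint : Integrable (fun y => g (∑ i, x i * y i)) (gammaPi a)) :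
    Integrable fun v => g v * linearFormDensity a x k v := by
  replace hint := (integrable_map_measure (f := fun y : ι → ℝ => ∑ i, x i * y i) (g := g)
    hg.aestronglyMeasurable (Continuous.aemeasurable (by fun_prop))).2 hint
  rw [map_sum_gammaPi ha hak hxk, integrable_withDensity_iff_integrable_smul'
    (continuous_linearFormDensity ha hak hxk).measurable.ennreal_ofReal (by simp)] at hint
  simpa only [ENNReal.toReal_ofReal (linearFormDensity_nonneg (ha k) hxk _), Complex.real_smul,
    mul_comm] using hint

end LinearFormExpectation

section Tilting

lemma update_add_one_pos {ι : Type*} [DecidableEq ι] {α : ι → ℝ} {k : ι} (hα : ∀ i, 0 < α i)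
    (i : ι) : 0 < Function.update α k (α k + 1) i := by
  rcases eq_or_ne i k with rfl | hik
  · rw [Function.update_self]
    linarith [hα i]
  · rw [Function.update_of_ne hik]
    exact hα i

variable {ι : Type*} [Fintype ι] {α x : ι → ℝ} {k : ι} {l : ℝ}

/-- The mean of `∑ i, x i * Y i` when the independent variables `Y i ∼ Γ(α i, 1)` are tilted by
`exp (l * ∑ i, x i * Y i)`, so that `Y i ∼ Γ(α i, 1 - l * x i)`. -/
def tiltMean (α x : ι → ℝ) (l : ℝ) : ℝ := ∑ i, α i * (x i / (1 - l * x i))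

/-- The variance of `∑ i, x i * Y i` under the tilted law of `tiltMean`. -/
def tiltVar (α x : ι → ℝ) (l : ℝ) : ℝ := ∑ i, α i * (x i / (1 - l * x i)) ^ 2

/-- The relative entropy of the exponential law of rate `1 - z` with respect to that of rate `1`. -/
def expTiltEntropy (z : ℝ) : ℝ := z / (1 - z) + log (1 - z)

/-- The relative entropy of the tilted law of `tiltMean` with respect to the original one. -/
def tiltEntropy (α x : ι → ℝ) (l : ℝ) : ℝ := ∑ i, α i * expTiltEntropy (l * x i)

lemma tiltEntropy_eq (α x : ι → ℝ) (l : ℝ) :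
    tiltEntropy α x l = l * tiltMean α x l + ∑ i, α i * log (1 - l * x i) := by
  simp_rw [tiltEntropy, expTiltEntropy, tiltMean, Finset.mul_sum, ← Finset.sum_add_distrib]
  exact Finset.sum_congr rfl fun i _ => by ring

lemma one_sub_mul_eq_mul_one_sub {l x : ℝ} (h : l * x < 1) (t : ℝ) :
    1 - (l + t * Complex.I) * x
      = ((1 - l * x : ℝ) : ℂ) * (1 - (t * (x / (1 - l * x)) : ℝ) * Complex.I) := by
  have hx : ((1 - l * x : ℝ) : ℂ) * (x / (1 - l * x) : ℝ) = x := by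
    rw [← Complex.ofReal_mul, mul_div_cancel₀ _ (sub_pos.2 h).ne']
  rw [Complex.ofReal_mul t]
  linear_combination (norm := (push_cast; ring)) t * Complex.I * hx

lemma one_sub_mul_cpow_neg {l x : ℝ} (h : l * x < 1) (a t : ℝ) :
    (1 - (l + t * Complex.I) * x) ^ (-a : ℂ)
      = Complex.exp (a * centeredExpCumulant (t * (x / (1 - l * x)))
          + (t * (a * (x / (1 - l * x))) : ℝ) * Complex.I + (-(a * log (1 - l * x)) : ℝ)) := by
  have hpos := sub_pos.2 h
  have hne := one_sub_ofReal_mul_I_ne_zero (t * (x / (1 - l * x)))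
  rw [one_sub_mul_eq_mul_one_sub h, Complex.cpow_def_of_ne_zero
    (mul_ne_zero (Complex.ofReal_ne_zero.2 hpos.ne') hne), Complex.log_ofReal_mul hpos hne,
    centeredExpCumulant]
  congr 1
  push_cast
  ring

lemma prod_one_sub_mul_cpow_neg (hl : ∀ i, l * x i < 1) (t : ℝ) :
    ∏ i, (1 - (l + t * Complex.I) * x i) ^ (-α i : ℂ)
      = Complex.exp (∑ i, α i * centeredExpCumulant (t * (x i / (1 - l * x i))))
        * Complex.exp (t * tiltMean α x l * Complex.I)
        * (exp (-∑ i, α i * log (1 - l * x i)) : ℝ) := by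
  simp_rw [fun i => one_sub_mul_cpow_neg (hl i) (α i) t]
  rw [← Complex.exp_sum, Finset.sum_add_distrib, Finset.sum_add_distrib, Complex.exp_add,
    Complex.exp_add, Complex.ofReal_exp, tiltMean]
  push_cast
  rw [Finset.mul_sum, Finset.sum_mul, Finset.sum_neg_distrib]

variable [DecidableEq ι]

lemma prod_cpow_neg_update_add_one {g : ι → ℂ} (hg : g k ≠ 0) :
    ∏ i, g i ^ (-(Function.update α k (α k + 1) i : ℝ) : ℂ) = (∏ i, g i ^ (-α i : ℂ)) / g k := by
  have hothers : ∏ i ∈ Finset.univ.erase k, g i ^ (-(Function.update α k (α k + 1) i : ℝ) : ℂ)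
      = ∏ i ∈ Finset.univ.erase k, g i ^ (-α i : ℂ) :=
    Finset.prod_congr rfl fun i hi => by rw [Function.update_of_ne (Finset.ne_of_mem_erase hi)]
  rw [← Finset.mul_prod_erase _ _ (Finset.mem_univ k), hothers, Function.update_self,
    ← Finset.mul_prod_erase _ (fun i => g i ^ (-α i : ℂ)) (Finset.mem_univ k)]
  push_cast
  rw [neg_add, Complex.cpow_add _ _ hg, Complex.cpow_neg_one]
  ring

lemma integral_cexp_mul_sum_gammaPi_update (hα : ∀ i, 0 < α i) (hl : ∀ i, l * x i < 1) (t : ℝ) :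
    ∫ y, Complex.exp ((l + t * Complex.I) * (∑ i, x i * y i : ℝ))
        ∂gammaPi (Function.update α k (α k + 1))
      = (exp (-∑ i, α i * log (1 - l * x i)) / (1 - l * x k) : ℝ)
        * (centeredGammaCharFun α (fun i => x i / (1 - l * x i)) k t
          * Complex.exp (t * tiltMean α x l * Complex.I)) := by
  have hre (i : ι) : (l + t * Complex.I).re * x i < 1 := by simpa using hl i
  rw [integral_cexp_mul_sum_gammaPi (update_add_one_pos hα) hre,
    prod_cpow_neg_update_add_one (g := fun i => 1 - (l + t * Complex.I) * x i)
      (one_sub_mul_ofReal_ne_zero (hre k)),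
    prod_one_sub_mul_cpow_neg hl, one_sub_mul_eq_mul_one_sub (hl k), centeredGammaCharFun,
    Complex.ofReal_div]
  simp only [div_eq_mul_inv, mul_inv]
  ring

lemma linearFormDensity_tiltMean (hα : ∀ i, 0 < α i) (hxk : 0 < x k) (hl : ∀ i, l * x i < 1)
    (hint : Integrable (centeredGammaCharFun α (fun i => x i / (1 - l * x i)) k)) :
    linearFormDensity (Function.update α k (α k + 1)) x k (tiltMean α x l)
      = exp (-tiltEntropy α x l) / (1 - l * x k)
        * ((2 * π)⁻¹ * (∫ t, centeredGammaCharFun α (fun i => x i / (1 - l * x i)) k t).re) := by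
  set a := Function.update α k (α k + 1)
  have ha : ∀ i, 0 < a i := update_add_one_pos hα
  have hak : 1 < a k := by simpa [a] using hα k
  have hexp : Continuous fun v : ℝ => Complex.exp (l * v) := by fun_prop
  have htilt : Integrable fun v : ℝ => Complex.exp (l * v) * linearFormDensity a x k v :=
    integrable_mul_linearFormDensity ha hak hxk hexp
      (integrable_cexp_mul_sum_gammaPi ha (by simpa using hl))
  have hdens := Complex.continuous_ofReal.comp (continuous_linearFormDensity ha hak hxk)
  have hinv := eq_integral_of_integral_cexp_mul_eq htilt (hexp.mul hdens).continuousAt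
    (hint.const_mul _) fun t => by
      rw [mul_assoc, ← integral_cexp_mul_sum_gammaPi_update hα hl t,
        ← integral_mul_linearFormDensity ha hak hxk
          (g := fun v => Complex.exp ((l + t * Complex.I) * v)) (by fun_prop)]
      refine integral_congr_ae (.of_forall fun v => ?_)
      simp only [← mul_assoc, ← Complex.exp_add]
      ring_nf
  rw [integral_const_mul] at hinv
  have hre := congrArg Complex.re hinv
  rw [mul_left_comm, Complex.re_ofReal_mul, ← Complex.ofReal_mul, ← Complex.ofReal_exp,
    ← Complex.ofReal_mul, Complex.ofReal_re] at hre
  rw [tiltEntropy_eq, neg_add, exp_add, exp_neg, mul_div_assoc, mul_assoc, eq_inv_mul_iff_mul_eq₀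
    (exp_pos _).ne', hre]
  congr 1
  exact_mod_cast (Complex.re_ofReal_mul (2 * π)⁻¹ _)

end Tilting

section ExpTiltEntropy

lemma expTiltEntropy_zero : expTiltEntropy 0 = 0 := by simp [expTiltEntropy]

lemma hasDerivAt_expTiltEntropy {z : ℝ} (hz : z < 1) :
    HasDerivAt expTiltEntropy (z / (1 - z) ^ 2) z := by
  have hne : 1 - z ≠ 0 := (sub_pos.2 hz).ne'
  have hsub : HasDerivAt (fun z : ℝ => 1 - z) (-1) z := (hasDerivAt_id z).const_sub 1
  refine (((hasDerivAt_id z).div hsub hne).add (hsub.log hne)).congr_deriv ?_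
  simp only [id]
  field_simp
  ring

lemma monotoneOn_expTiltEntropy_sub :
    MonotoneOn (fun z => expTiltEntropy z - z ^ 2 / 2) (Iio 1) := by
  have hderiv (z : ℝ) (hz : z ∈ Iio (1 : ℝ)) :
      HasDerivAt (fun z => expTiltEntropy z - z ^ 2 / 2) (z / (1 - z) ^ 2 - z) z :=
    ((hasDerivAt_expTiltEntropy hz).sub (((hasDerivAt_id z).pow 2).div_const 2)).congr_deriv
      (by simp)
  refine monotoneOn_of_hasDerivWithinAt_nonneg (convex_Iio 1)
    (fun z hz => (hderiv z hz).continuousAt.continuousWithinAt)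
    (fun z hz => (hderiv z (interior_subset hz)).hasDerivWithinAt) fun z hz => ?_
  have hz1 : 0 < 1 - z := sub_pos.2 (mem_Iio.1 (interior_subset hz))
  have hfactor : z / (1 - z) ^ 2 - z = z ^ 2 * (1 + (1 - z)) / (1 - z) ^ 2 := by
    field_simp
    ring
  rw [hfactor]
  positivity

lemma monotoneOn_sub_expTiltEntropy :
    MonotoneOn (fun z => (z / (1 - z)) ^ 2 / 2 - expTiltEntropy z) (Iio 1) := by
  have hderiv (z : ℝ) (hz : z ∈ Iio (1 : ℝ)) : HasDerivAt
      (fun z => (z / (1 - z)) ^ 2 / 2 - expTiltEntropy z) (z ^ 2 / (1 - z) ^ 3) z := by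
    have hne : 1 - z ≠ 0 := (sub_pos.2 hz).ne'
    have hsub : HasDerivAt (fun z : ℝ => 1 - z) (-1) z := (hasDerivAt_id z).const_sub 1
    have hdiv : HasDerivAt (fun z : ℝ => z / (1 - z)) (1 / (1 - z) ^ 2) z :=
      ((hasDerivAt_id z).div hsub hne).congr_deriv (by simp)
    refine (((hdiv.pow 2).div_const 2).sub (hasDerivAt_expTiltEntropy hz)).congr_deriv ?_
    simp only [Nat.cast_ofNat, Nat.add_one_sub_one, pow_one]
    field_simp
    ring
  refine monotoneOn_of_hasDerivWithinAt_nonneg (convex_Iio 1)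
    (fun z hz => (hderiv z hz).continuousAt.continuousWithinAt)
    (fun z hz => (hderiv z (interior_subset hz)).hasDerivWithinAt) fun z hz => ?_
  have hz1 : 0 < 1 - z := sub_pos.2 (mem_Iio.1 (interior_subset hz))
  positivity

lemma sq_le_two_mul_expTiltEntropy {z : ℝ} (h : 0 ≤ z) (hz : z < 1) :
    z ^ 2 ≤ 2 * expTiltEntropy z := by
  have := monotoneOn_expTiltEntropy_sub (mem_Iio.2 one_pos) hz h
  simp only [expTiltEntropy_zero] at this
  linarith

lemma two_mul_expTiltEntropy_le_sq {z : ℝ} (h : z ≤ 0) : 2 * expTiltEntropy z ≤ z ^ 2 := by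
  have := monotoneOn_expTiltEntropy_sub (mem_Iio.2 (h.trans_lt one_pos)) (mem_Iio.2 one_pos) h
  simp only [expTiltEntropy_zero] at this
  linarith

lemma two_mul_expTiltEntropy_le_div_sq {z : ℝ} (h : 0 ≤ z) (hz : z < 1) :
    2 * expTiltEntropy z ≤ (z / (1 - z)) ^ 2 := by
  have := monotoneOn_sub_expTiltEntropy (mem_Iio.2 one_pos) hz h
  simp only [expTiltEntropy_zero, zero_div] at this
  linarith

lemma div_sq_le_two_mul_expTiltEntropy {z : ℝ} (h : z ≤ 0) :
    (z / (1 - z)) ^ 2 ≤ 2 * expTiltEntropy z := by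
  have := monotoneOn_sub_expTiltEntropy (mem_Iio.2 (h.trans_lt one_pos)) (mem_Iio.2 one_pos) h
  simp only [expTiltEntropy_zero, zero_div] at this
  linarith

lemma div_mul_sq_le_two_mul_expTiltEntropy {z w : ℝ} (hw : 0 ≤ w) (hw1 : w < 1) (hz : z ≤ w) :
    (z / (1 - z) * (1 - w)) ^ 2 ≤ 2 * expTiltEntropy z := by
  have hz1 : 0 < 1 - z := by linarith
  rcases le_total 0 z with h | h
  · refine le_trans ?_ (sq_le_two_mul_expTiltEntropy h (hz.trans_lt hw1))
    rw [div_mul_eq_mul_div, mul_div_assoc, mul_pow]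
    refine mul_le_of_le_one_right (sq_nonneg z) (pow_le_one₀ ?_ ?_)
    · exact div_nonneg (by linarith) hz1.le
    · rw [div_le_one hz1]
      linarith
  · refine le_trans ?_ (div_sq_le_two_mul_expTiltEntropy h)
    rw [mul_pow]
    exact mul_le_of_le_one_right (sq_nonneg _) (pow_le_one₀ (by linarith) (by linarith))

lemma two_mul_expTiltEntropy_le_div_mul_sq {z w : ℝ} (hw : w ≤ 0) (hz : w ≤ z) (hz1 : z < 1) :
    2 * expTiltEntropy z ≤ (z / (1 - z) * (1 - w)) ^ 2 := by
  have hz1' : 0 < 1 - z := by linarith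
  rcases le_total 0 z with h | h
  · refine (two_mul_expTiltEntropy_le_div_sq h hz1).trans ?_
    rw [mul_pow]
    exact le_mul_of_one_le_right (sq_nonneg _) (one_le_pow₀ (by linarith))
  · refine (two_mul_expTiltEntropy_le_sq h).trans ?_
    rw [div_mul_eq_mul_div, mul_div_assoc, mul_pow]
    refine le_mul_of_one_le_right (sq_nonneg z) (one_le_pow₀ ?_)
    rw [one_le_div hz1']
    linarith

lemma expTiltEntropy_pos {z : ℝ} (hz : z < 1) (h : z ≠ 0) : 0 < expTiltEntropy z := by
  rcases h.lt_or_gt with h | h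
  · have hpos := sq_pos_of_ne_zero (div_ne_zero h.ne (sub_pos.2 hz).ne')
    linarith [div_sq_le_two_mul_expTiltEntropy h.le]
  · linarith [sq_le_two_mul_expTiltEntropy h.le hz, sq_pos_of_pos h]

lemma expTiltEntropy_nonneg {z : ℝ} (hz : z < 1) : 0 ≤ expTiltEntropy z := by
  rcases eq_or_ne z 0 with rfl | h
  · rw [expTiltEntropy_zero]
  · exact (expTiltEntropy_pos hz h).le

lemma sq_inv_sqrt_sub_one_le_expTiltEntropy {z : ℝ} (hz : z < 1) :
    ((√(1 - z))⁻¹ - 1) ^ 2 ≤ expTiltEntropy z := by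
  have hpos : 0 < 1 - z := sub_pos.2 hz
  have hlog : log (√(1 - z))⁻¹ ≤ (√(1 - z))⁻¹ - 1 := log_le_sub_one_of_pos (by positivity)
  rw [log_inv, log_sqrt hpos.le] at hlog
  have hdiv : z / (1 - z) = ((√(1 - z))⁻¹) ^ 2 - 1 := by
    rw [inv_pow, sq_sqrt hpos.le]
    field_simp
    ring
  rw [expTiltEntropy, hdiv]
  linarith

lemma tendsto_expTiltEntropy_atTop : Tendsto expTiltEntropy (𝓝[<] 1) atTop := by
  have hsqrt : Tendsto (fun z : ℝ => √(1 - z)) (𝓝[<] 1) (𝓝[>] 0) := by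
    refine tendsto_nhdsWithin_iff.2 ⟨?_, ?_⟩
    · have hcont : Continuous fun z : ℝ => √(1 - z) := by fun_prop
      simpa using (hcont.tendsto 1).mono_left nhdsWithin_le_nhds
    · filter_upwards [self_mem_nhdsWithin] with z hz using sqrt_pos.2 (sub_pos.2 hz)
  have hsq : Tendsto (fun z : ℝ => ((√(1 - z))⁻¹ - 1) ^ 2) (𝓝[<] 1) atTop :=
    (tendsto_pow_atTop two_ne_zero).comp
      (tendsto_atTop_add_const_right _ (-1) hsqrt.inv_tendsto_nhdsGT_zero)
  refine tendsto_atTop_mono' _ ?_ hsq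
  filter_upwards [self_mem_nhdsWithin] with z hz using sq_inv_sqrt_sub_one_le_expTiltEntropy hz

end ExpTiltEntropy

section TiltRange

variable {ι : Type*} {α x : ι → ℝ} {j k : ι} {l : ℝ}

/-- The coefficients `x` of a linear form take both signs and are smallest at `j`, largest at `k`.
The admissible tilts of `∑ i, x i * Y i` then form the interval `Ioo (x j)⁻¹ (x k)⁻¹`. -/
structure IsExtremalPair (x : ι → ℝ) (j k : ι) : Prop where
  neg_left : x j < 0
  pos_right : 0 < x k
  left_le : ∀ i, x j ≤ x i
  le_right : ∀ i, x i ≤ x k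

namespace IsExtremalPair

lemma mul_lt_one (h : IsExtremalPair x j k) (hl : l ∈ Ioo (x j)⁻¹ (x k)⁻¹) (i : ι) :
    l * x i < 1 := by
  rcases le_total 0 l with hl0 | hl0
  · calc l * x i ≤ l * x k := mul_le_mul_of_nonneg_left (h.le_right i) hl0
      _ < 1 := (lt_div_iff₀ h.pos_right).1 (hl.2.trans_eq (one_div _).symm)
  · calc l * x i ≤ l * x j := mul_le_mul_of_nonpos_left (h.left_le i) hl0
      _ < 1 := by simpa [h.neg_left.ne] using mul_lt_mul_of_neg_right hl.1 h.neg_left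

lemma zero_mem_Ioo (h : IsExtremalPair x j k) : (0 : ℝ) ∈ Ioo (x j)⁻¹ (x k)⁻¹ :=
  ⟨inv_neg''.2 h.neg_left, inv_pos.2 h.pos_right⟩

lemma Ioo_inv_mem_nhdsLT (h : IsExtremalPair x j k) : Ioo (x j)⁻¹ (x k)⁻¹ ∈ 𝓝[<] (x k)⁻¹ :=
  Ioo_mem_nhdsLT (h.zero_mem_Ioo.1.trans h.zero_mem_Ioo.2)

lemma Ioo_inv_mem_nhdsGT (h : IsExtremalPair x j k) : Ioo (x j)⁻¹ (x k)⁻¹ ∈ 𝓝[>] (x j)⁻¹ :=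
  Ioo_mem_nhdsGT (h.zero_mem_Ioo.1.trans h.zero_mem_Ioo.2)

end IsExtremalPair

variable [Fintype ι]

lemma hasDerivAt_tiltMean (hl : ∀ i, l * x i < 1) :
    HasDerivAt (tiltMean α x) (tiltVar α x l) l := by
  refine HasDerivAt.fun_sum fun i _ => HasDerivAt.const_mul _ ?_
  have hsub : HasDerivAt (fun l : ℝ => 1 - l * x i) (-x i) l := by
    simpa using ((hasDerivAt_id l).mul_const (x i)).const_sub 1
  refine ((hasDerivAt_const l (x i)).div hsub (sub_pos.2 (hl i)).ne').congr_deriv ?_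
  field_simp
  ring

lemma hasDerivAt_tiltEntropy (hl : ∀ i, l * x i < 1) :
    HasDerivAt (tiltEntropy α x) (l * tiltVar α x l) l := by
  rw [tiltVar, Finset.mul_sum]
  refine HasDerivAt.fun_sum fun i _ => ?_
  refine (((hasDerivAt_expTiltEntropy (hl i)).comp l
    ((hasDerivAt_id l).mul_const (x i))).const_mul (α i)).congr_deriv ?_
  field_simp

lemma tiltVar_pos (hα : ∀ i, 0 < α i) (hxk : x k ≠ 0) (hl : l * x k < 1) :
    0 < tiltVar α x l := by
  refine Finset.sum_pos' (fun i _ => mul_nonneg (hα i).le (sq_nonneg _))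
    ⟨k, Finset.mem_univ k, mul_pos (hα k) (sq_pos_of_ne_zero ?_)⟩
  exact div_ne_zero hxk (sub_pos.2 hl).ne'

lemma tiltEntropy_pos (hα : ∀ i, 0 < α i) (hxk : x k ≠ 0) (hl : ∀ i, l * x i < 1) (hl0 : l ≠ 0) :
    0 < tiltEntropy α x l :=
  Finset.sum_pos' (fun i _ => mul_nonneg (hα i).le (expTiltEntropy_nonneg (hl i)))
    ⟨k, Finset.mem_univ k, mul_pos (hα k) (expTiltEntropy_pos (hl k) (mul_ne_zero hl0 hxk))⟩

lemma tiltEntropy_nonneg (hα : ∀ i, 0 < α i) (hl : ∀ i, l * x i < 1) : 0 ≤ tiltEntropy α x l :=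
  Finset.sum_nonneg fun i _ => mul_nonneg (hα i).le (expTiltEntropy_nonneg (hl i))

lemma sq_mul_tiltVar_mul_sq (c : ℝ) :
    l ^ 2 * tiltVar α x l * c ^ 2 = ∑ i, α i * (l * x i / (1 - l * x i) * c) ^ 2 := by
  rw [tiltVar, Finset.mul_sum, Finset.sum_mul]
  exact Finset.sum_congr rfl fun i _ => by ring

lemma sq_mul_tiltVar_mul_sq_le (hα : ∀ i, 0 < α i) (hle : ∀ i, x i ≤ x k) (hxk : 0 < x k)
    (hl : 0 ≤ l) (hlk : l * x k < 1) :
    l ^ 2 * tiltVar α x l * (1 - l * x k) ^ 2 ≤ 2 * tiltEntropy α x l := by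
  rw [sq_mul_tiltVar_mul_sq, tiltEntropy, Finset.mul_sum]
  simp only [mul_left_comm (2 : ℝ)]
  exact Finset.sum_le_sum fun i _ => mul_le_mul_of_nonneg_left
    (div_mul_sq_le_two_mul_expTiltEntropy (mul_nonneg hl hxk.le) hlk
      (mul_le_mul_of_nonneg_left (hle i) hl)) (hα i).le

lemma two_mul_tiltEntropy_le (hα : ∀ i, 0 < α i) (hle : ∀ i, x i ≤ x k) (hxk : 0 < x k)
    (hl : l ≤ 0) (hlx : ∀ i, l * x i < 1) :
    2 * tiltEntropy α x l ≤ l ^ 2 * tiltVar α x l * (1 - l * x k) ^ 2 := by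
  rw [sq_mul_tiltVar_mul_sq, tiltEntropy, Finset.mul_sum]
  simp only [mul_left_comm (2 : ℝ)]
  exact Finset.sum_le_sum fun i _ => mul_le_mul_of_nonneg_left
    (two_mul_expTiltEntropy_le_div_mul_sq (mul_nonpos_of_nonpos_of_nonneg hl hxk.le)
      (mul_le_mul_of_nonpos_left (hle i) hl) (hlx i)) (hα i).le

end TiltRange

section SaddlePointApproximation

variable {ι : Type*} [Fintype ι] {α x : ι → ℝ} {j k : ι} {l : ℝ}

/-- The saddle-point approximation, at the point `tiltMean α x l`, of the density of the linear form
`∑ i, x i * Y i` when `Y k ∼ Γ(α k + 1, 1)` and `Y i ∼ Γ(α i, 1)` for `i ≠ k`. -/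
def saddlePointDensity (α x : ι → ℝ) (k : ι) (l : ℝ) : ℝ :=
  exp (-tiltEntropy α x l) / (√(2 * π) * √(tiltVar α x l) * (1 - l * x k))

lemma div_one_sub_mul_le_div_one_sub_mul {u v : ℝ} (hu : l * u < 1) (hv : l * v < 1) (huv : u ≤ v) :
    u / (1 - l * u) ≤ v / (1 - l * v) := by
  rw [div_le_div_iff₀ (sub_pos.2 hu) (sub_pos.2 hv)]
  linarith

lemma sqrt_mul_abs_div_le_sqrt_tiltVar (hα : ∀ i, 0 < α i) {c : ℝ} {i : ι} (hc : c ≤ α i) :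
    √c * |x i / (1 - l * x i)| ≤ √(tiltVar α x l) := by
  rw [← sqrt_sq_eq_abs, ← sqrt_mul' _ (sq_nonneg _)]
  refine sqrt_le_sqrt ((mul_le_mul_of_nonneg_right hc (sq_nonneg _)).trans ?_)
  exact Finset.single_le_sum (f := fun i => α i * (x i / (1 - l * x i)) ^ 2)
    (fun i _ => mul_nonneg (hα i).le (sq_nonneg _)) (Finset.mem_univ i)

lemma IsExtremalPair.abs_div_le (h : IsExtremalPair x j k) (hα : ∀ i, 0 < α i)
    (hl : l ∈ Ioo (x j)⁻¹ (x k)⁻¹) {c : ℝ} (hc : 0 < c) (hcj : c ≤ α j) (hck : c ≤ α k) (i : ι) :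
    |x i / (1 - l * x i)| ≤ (√c)⁻¹ * √(tiltVar α x l) := by
  have hlx := h.mul_lt_one hl
  have hj := sqrt_mul_abs_div_le_sqrt_tiltVar (x := x) (l := l) hα hcj
  have hk := sqrt_mul_abs_div_le_sqrt_tiltVar (x := x) (l := l) hα hck
  rw [← le_inv_mul_iff₀ (sqrt_pos.2 hc), abs_le] at hj hk
  rw [abs_le]
  exact ⟨hj.1.trans (div_one_sub_mul_le_div_one_sub_mul (hlx j) (hlx i) (h.left_le i)),
    (div_one_sub_mul_le_div_one_sub_mul (hlx i) (hlx k) (h.le_right i)).trans hk.2⟩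

lemma twelve_mul_pi_mul_inv_sqrt {ε : ℝ} (hε : 0 < ε) :
    12 * π * (√(72 * π / ε ^ 2))⁻¹ = ε * √(2 * π) := by
  have hroot : √(72 * π / ε ^ 2) = 6 * √(2 * π) / ε := by
    rw [sqrt_div (by positivity), sqrt_sq hε.le, show 72 * π = 6 ^ 2 * (2 * π) by ring,
      sqrt_mul (by positivity), sqrt_sq (by positivity)]
  have hsq : √(2 * π) ^ 2 = 2 * π := sq_sqrt (by positivity)
  rw [hroot, inv_div, ← mul_div_assoc, div_eq_iff (by positivity)]
  linear_combination -6 * ε * hsq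

lemma abs_linearFormDensity_sub_saddlePointDensity_le [DecidableEq ι] (h : IsExtremalPair x j k)
    (hα : ∀ i, 0 < α i) {ε : ℝ} (hε : ε ∈ Ioo (0 : ℝ) 1) (hj : 72 * π / ε ^ 2 ≤ α j)
    (hk : 72 * π / ε ^ 2 ≤ α k) (hl : l ∈ Ioo (x j)⁻¹ (x k)⁻¹) :
    |linearFormDensity (Function.update α k (α k + 1)) x k (tiltMean α x l)
      - saddlePointDensity α x k l| ≤ ε * saddlePointDensity α x k l := by
  obtain ⟨hε0, hε1⟩ := hε
  have hlx := h.mul_lt_one hl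
  have hlk : 0 < 1 - l * x k := sub_pos.2 (hlx k)
  have hvar : 0 < tiltVar α x l := tiltVar_pos hα h.pos_right.ne' (hlx k)
  have hc : 72 ≤ 72 * π / ε ^ 2 := by
    rw [le_div_iff₀ (by positivity)]
    nlinarith [pi_gt_three]
  have hη : (√(72 * π / ε ^ 2))⁻¹ ^ 2 ≤ 1 / 8 := by
    rw [inv_pow, sq_sqrt (by linarith), ← one_div]
    exact one_div_le_one_div_of_le (by norm_num) (by linarith)
  have habs := h.abs_div_le hα hl (by linarith) hj hk
  have hsum : ∑ i, α i * (x i / (1 - l * x i)) ^ 2 = √(tiltVar α x l) ^ 2 := (sq_sqrt hvar.le).symm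
  have hint := integrable_centeredGammaCharFun (fun i => (hα i).le) (sqrt_pos.2 hvar) hsum habs hη k
  have happrox := abs_re_integral_centeredGammaCharFun_sub_le (fun i => (hα i).le)
    (sqrt_pos.2 hvar) hsum habs hη k
  set weight : ℝ := exp (-tiltEntropy α x l) / (1 - l * x k) * (2 * π)⁻¹
  have hsaddle : saddlePointDensity α x k l = weight * (√(2 * π) / √(tiltVar α x l)) := by
    have hinv : (√(2 * π))⁻¹ = (2 * π)⁻¹ * √(2 * π) := by
      rw [← div_eq_inv_mul, sqrt_div_self]
    simp only [saddlePointDensity, weight, div_eq_mul_inv, mul_inv, hinv]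
    ring
  rw [linearFormDensity_tiltMean hα h.pos_right hlx hint, hsaddle, ← mul_assoc, ← mul_sub, abs_mul,
    abs_of_pos (by positivity), mul_left_comm]
  refine mul_le_mul_of_nonneg_left (happrox.trans_eq ?_) (by positivity)
  rw [twelve_mul_pi_mul_inv_sqrt hε0, mul_div_assoc]

end SaddlePointApproximation

section PiDensity

variable {n : ℕ} {E : Type*} [MeasurableSpace E] {μ : Fin n → Measure E} [∀ i, SigmaFinite (μ i)]
  {g : Fin n → E → ℝ≥0∞}

lemma lintegral_fin_prod_eq_prod (hg : ∀ i, Measurable (g i)) :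
    ∫⁻ y, ∏ i, g i (y i) ∂Measure.pi μ = ∏ i, ∫⁻ t, g i t ∂μ i := by
  induction n with
  | zero => simp
  | succ n ih =>
    have hprod : Measurable fun y : Fin n → E => ∏ i, g i.succ (y i) :=
      Finset.measurable_fun_prod _ fun i _ => (hg i.succ).comp (measurable_pi_apply i)
    rw [← (measurePreserving_piFinSuccAbove μ 0).symm.lintegral_comp_emb
      (MeasurableEquiv.measurableEmbedding _), Fin.prod_univ_succ, ← ih fun i => hg i.succ,
      ← lintegral_prod_mul (hg 0).aemeasurable hprod.aemeasurable]
    simp [MeasurableEquiv.piFinSuccAbove_symm_apply, Fin.insertNthEquiv, Fin.prod_univ_succ]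

lemma pi_withDensity (hg : ∀ i, Measurable (g i)) [∀ i, SigmaFinite ((μ i).withDensity (g i))] :
    Measure.pi (fun i => (μ i).withDensity (g i))
      = (Measure.pi μ).withDensity fun y => ∏ i, g i (y i) := by
  refine Measure.pi_eq fun s hs => ?_
  have hind (y : Fin n → E) : (univ.pi s).indicator (fun y => ∏ i, g i (y i)) y
      = ∏ i, (s i).indicator (g i) (y i) := by
    classical simp [indicator_apply, Finset.prod_ite_zero]
  rw [withDensity_apply _ (.univ_pi hs), ← lintegral_indicator (.univ_pi hs)]
  simp_rw [hind]
  rw [lintegral_fin_prod_eq_prod fun i => (hg i).indicator (hs i)]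
  exact Finset.prod_congr rfl fun i _ => by
    rw [withDensity_apply _ (hs i), lintegral_indicator (hs i)]

end PiDensity

section DirichletGamma

variable {m : ℕ} {a : Fin (m + 1) → ℝ}

lemma lintegral_eq_ofReal_mul_lintegral_smul {F : (Fin m → ℝ) → ℝ≥0∞} {c : ℝ} (hc : 0 < c) :
    ∫⁻ y, F y = ENNReal.ofReal (c ^ m) * ∫⁻ x, F (c • x) := by
  have hemb : MeasurableEmbedding fun x : Fin m → ℝ => c • x :=
    (Homeomorph.smulOfNeZero c hc.ne').measurableEmbedding
  rw [← hemb.lintegral_map, Measure.map_addHaar_smul _ hc.ne', lintegral_smul_measure, smul_eq_mul,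
    ← mul_assoc, ← ENNReal.ofReal_mul (by positivity), abs_of_pos (by positivity),
    Module.finrank_fintype_fun_eq_card, Fintype.card_fin, mul_inv_cancel₀ (by positivity),
    ENNReal.ofReal_one, one_mul]

lemma sum_snoc_sub_sum (x : Fin m → ℝ) (s : ℝ) :
    ∑ i, (Fin.snoc x (s - ∑ i, x i) : Fin (m + 1) → ℝ) i = s := by
  simp [Fin.sum_univ_castSucc]

lemma snoc_smul_sub_sum (x : Fin m → ℝ) (s : ℝ) :
    (Fin.snoc (s • x) (s - ∑ i, (s • x) i) : Fin (m + 1) → ℝ)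
      = s • (Fin.snoc x (1 - ∑ i, x i) : Fin (m + 1) → ℝ) := by
  ext i
  refine Fin.lastCases ?_ (fun i => ?_) i
  · simp [← Finset.mul_sum, mul_sub]
  · simp

lemma lintegral_eq_lintegral_snoc_sub_sum {F : (Fin (m + 1) → ℝ) → ℝ≥0∞} (hF : Measurable F) :
    ∫⁻ y, F y = ∫⁻ s : ℝ, ∫⁻ x : Fin m → ℝ, F (Fin.snoc x (s - ∑ i, x i)) := by
  have hmp := (volume_preserving_piFinSuccAbove (fun _ : Fin (m + 1) => ℝ) (Fin.last m)).symm
  have hsnoc : Measurable fun p : (Fin m → ℝ) × ℝ =>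
      (Fin.snoc p.1 (p.2 - ∑ i, p.1 i) : Fin (m + 1) → ℝ) :=
    Continuous.measurable (by fun_prop)
  have hcomp := hF.comp (MeasurableEquiv.measurable
    (MeasurableEquiv.piFinSuccAbove (fun _ : Fin (m + 1) => ℝ) (Fin.last m)).symm)
  rw [← hmp.lintegral_comp_emb (MeasurableEquiv.measurableEmbedding _), Measure.volume_eq_prod,
    lintegral_prod_symm (fun p => F _) hcomp.aemeasurable,
    lintegral_lintegral_swap (f := fun s x => F (Fin.snoc x (s - ∑ i, x i)))
      (hF.comp (hsnoc.comp measurable_swap)).aemeasurable]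
  refine lintegral_congr fun x => ?_
  rw [lintegral_sub_right_eq_self (fun t => F (Fin.snoc x t))]
  simp [MeasurableEquiv.piFinSuccAbove_symm_apply, Fin.insertNthEquiv]

lemma gammaPi_eq_withDensity (ha : ∀ i, 0 < a i) :
    gammaPi a = volume.withDensity fun y => ∏ i, gammaPDF (a i) 1 (y i) := by
  have (i : Fin (m + 1)) : IsProbabilityMeasure (volume.withDensity (gammaPDF (a i) 1)) :=
    isProbabilityMeasure_gammaMeasure (ha i) one_pos
  exact pi_withDensity fun i => measurable_gammaPDF (a i) 1

lemma prod_gammaPDF_of_sum_neg {y : Fin (m + 1) → ℝ} (hy : ∑ i, y i < 0) :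
    ∏ i, gammaPDF (a i) 1 (y i) = 0 := by
  obtain ⟨i, hi, hneg⟩ := Finset.exists_lt_of_sum_lt (hy.trans_eq Finset.sum_const_zero.symm)
  exact Finset.prod_eq_zero hi (gammaPDF_of_neg hneg)

lemma measurable_dirichletDensity (a : Fin (m + 1) → ℝ) : Measurable (dirichletDensity m a) := by
  refine Measurable.indicator (by fun_prop) ?_
  refine MeasurableSet.inter ?_ (measurableSet_le
    (Finset.measurable_fun_sum _ fun i _ => measurable_pi_apply i) measurable_const)
  change MeasurableSet {x : Fin m → ℝ | ∀ i, 0 ≤ x i}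
  rw [ofPred_forall]
  exact .iInter fun i => measurableSet_le measurable_const (measurable_pi_apply i)

lemma prod_rpow_mul_rpow_eq_prod_snoc (a : Fin (m + 1) → ℝ) (x : Fin m → ℝ) (t : ℝ) :
    (∏ i, x i ^ (a i.castSucc - 1)) * t ^ (a (Fin.last m) - 1)
      = ∏ i, (Fin.snoc x t : Fin (m + 1) → ℝ) i ^ (a i - 1) := by
  simp [Fin.prod_univ_castSucc]

lemma gammaPDF_one_mul {a s w : ℝ} (hs : 0 < s) (hw : 0 ≤ w) :
    gammaPDF a 1 (s * w)
      = ENNReal.ofReal ((Gamma a)⁻¹ * (s ^ (a - 1) * exp (-(s * w))) * w ^ (a - 1)) := by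
  rw [gammaPDF_of_nonneg (mul_nonneg hs.le hw), mul_rpow hs.le hw, one_rpow, one_mul]
  ring_nf

lemma prod_gammaPDF_smul (ha : ∀ i, 0 < a i) {w : Fin (m + 1) → ℝ} (hw : ∀ i, 0 ≤ w i)
    (hsum : ∑ i, w i = 1) {s : ℝ} (hs : 0 < s) :
    ∏ i, gammaPDF (a i) 1 (s * w i)
      = ENNReal.ofReal ((∏ i, (Gamma (a i))⁻¹) * (s ^ (∑ i, (a i - 1)) * exp (-s)))
        * ENNReal.ofReal (∏ i, w i ^ (a i - 1)) := by
  have hΓ (i) : 0 ≤ (Gamma (a i))⁻¹ := inv_nonneg.2 (Gamma_pos_of_pos (ha i)).le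
  have hexp : exp (-s) = ∏ i, exp (-(s * w i)) := by
    rw [← exp_sum, Finset.sum_neg_distrib, ← Finset.mul_sum, hsum, mul_one]
  simp_rw [gammaPDF_one_mul hs (hw _)]
  rw [← ENNReal.ofReal_prod_of_nonneg fun i _ => mul_nonneg
      (mul_nonneg (hΓ i) (by positivity)) (rpow_nonneg (hw i) _),
    ← ENNReal.ofReal_mul (mul_nonneg (Finset.prod_nonneg fun i _ => hΓ i) (by positivity)),
    Finset.prod_mul_distrib, Finset.prod_mul_distrib, Finset.prod_mul_distrib,
    ← rpow_sum_of_pos hs, hexp]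

lemma prod_gammaPDF_smul_snoc (ha : ∀ i, 0 < a i) (x : Fin m → ℝ) {s : ℝ} (hs : 0 < s) :
    ∏ i, gammaPDF (a i) 1 ((s • (Fin.snoc x (1 - ∑ i, x i) : Fin (m + 1) → ℝ)) i)
      = ENNReal.ofReal ((∏ i, (Gamma (a i))⁻¹) * (s ^ (∑ i, (a i - 1)) * exp (-s)))
        * ENNReal.ofReal (dirichletDensity m a x) := by
  have hsimplex : x ∈ {x : Fin m → ℝ | (∀ i, 0 ≤ x i) ∧ ∑ i, x i ≤ 1}
      ↔ ∀ i, 0 ≤ (Fin.snoc x (1 - ∑ i, x i) : Fin (m + 1) → ℝ) i := by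
    simp [Fin.forall_fin_succ']
  rw [dirichletDensity]
  by_cases hx : ∀ i, 0 ≤ (Fin.snoc x (1 - ∑ i, x i) : Fin (m + 1) → ℝ) i
  · rw [indicator_of_mem (hsimplex.2 hx), prod_rpow_mul_rpow_eq_prod_snoc]
    exact prod_gammaPDF_smul ha hx (sum_snoc_sub_sum x 1) hs
  · rw [indicator_of_notMem (mt hsimplex.1 hx), ENNReal.ofReal_zero, mul_zero]
    obtain ⟨i, hi⟩ := not_forall.1 hx
    exact Finset.prod_eq_zero (Finset.mem_univ i)
      (gammaPDF_of_neg (mul_neg_of_pos_of_neg hs (not_le.1 hi)))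

lemma measurable_snoc_one_sub_sum :
    Measurable fun x : Fin m → ℝ => (Fin.snoc x (1 - ∑ i, x i) : Fin (m + 1) → ℝ) :=
  Continuous.measurable (by fun_prop)

lemma lintegral_indicator_prod_gammaPDF_snoc (ha : ∀ i, 0 < a i) {C : Set (Fin (m + 1) → ℝ)}
    (hC : MeasurableSet C) (hcone : ∀ s > (0 : ℝ), ∀ y, s • y ∈ C ↔ y ∈ C) {s : ℝ} (hs : 0 < s) :
    ∫⁻ x : Fin m → ℝ, C.indicator (fun y => ∏ i, gammaPDF (a i) 1 (y i))
        (Fin.snoc x (s - ∑ i, x i))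
      = ENNReal.ofReal (s ^ m) *
          ENNReal.ofReal ((∏ i, (Gamma (a i))⁻¹) * (s ^ (∑ i, (a i - 1)) * exp (-s)))
        * dirichletBase m a {x | Fin.snoc x (1 - ∑ i, x i) ∈ C} := by
  have hD : MeasurableSet {x : Fin m → ℝ | Fin.snoc x (1 - ∑ i, x i) ∈ C} :=
    measurable_snoc_one_sub_sum hC
  rw [lintegral_eq_ofReal_mul_lintegral_smul hs, mul_assoc, dirichletBase, withDensity_apply _ hD,
    ← lintegral_indicator hD, ← lintegral_const_mul _
      ((measurable_dirichletDensity a).ennreal_ofReal.indicator hD)]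
  congr 1
  refine lintegral_congr fun x => ?_
  classical
  rw [snoc_smul_sub_sum, indicator_apply, indicator_apply, hcone s hs,
    prod_gammaPDF_smul_snoc ha x hs, mul_ite, mul_zero]
  rfl

lemma exists_gammaPi_eq_mul_dirichletBase (ha : ∀ i, 0 < a i) :
    ∃ Z : ℝ≥0∞, ∀ C : Set (Fin (m + 1) → ℝ), MeasurableSet C →
      (∀ s > (0 : ℝ), ∀ y, s • y ∈ C ↔ y ∈ C) →
      gammaPi a C = Z * dirichletBase m a {x | Fin.snoc x (1 - ∑ i, x i) ∈ C} := by
  refine ⟨∫⁻ s in Ioi 0, ENNReal.ofReal (s ^ m) *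
    ENNReal.ofReal ((∏ i, (Gamma (a i))⁻¹) * (s ^ (∑ i, (a i - 1)) * exp (-s))),
    fun C hC hcone => ?_⟩
  have hdens : Measurable fun y : Fin (m + 1) → ℝ => ∏ i, gammaPDF (a i) 1 (y i) :=
    Finset.measurable_fun_prod _ fun i _ =>
      (measurable_gammaPDF (a i) 1).comp (measurable_pi_apply i)
  rw [gammaPi_eq_withDensity ha, withDensity_apply _ hC, ← lintegral_indicator hC,
    lintegral_eq_lintegral_snoc_sub_sum (hdens.indicator hC), ← lintegral_mul_const _ (by fun_prop),
    ← lintegral_indicator measurableSet_Ioi]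
  refine lintegral_congr_ae ?_
  filter_upwards [Measure.ae_ne volume (0 : ℝ)] with s hs
  rcases hs.lt_or_gt with hs | hs
  · rw [indicator_of_notMem (notMem_Ioi.2 hs.le), ← lintegral_zero]
    refine lintegral_congr fun x => indicator_apply_eq_zero.2 fun _ => ?_
    exact prod_gammaPDF_of_sum_neg ((sum_snoc_sub_sum x s).trans_lt hs)
  · rw [indicator_of_mem (mem_Ioi.2 hs), lintegral_indicator_prod_gammaPDF_snoc ha hC hcone hs]

lemma dirichlet_apply_of_forall_smul_mem_iff (ha : ∀ i, 0 < a i) {C : Set (Fin (m + 1) → ℝ)}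
    (hC : MeasurableSet C) (hcone : ∀ s > (0 : ℝ), ∀ y, s • y ∈ C ↔ y ∈ C) :
    dirichlet m a C = gammaPi a C := by
  obtain ⟨Z, hZ⟩ := exists_gammaPi_eq_mul_dirichletBase ha
  have := isProbabilityMeasure_gammaPi ha
  have huniv : 1 = Z * dirichletBase m a univ := by
    simpa using hZ univ .univ fun _ _ _ => Iff.rfl
  rw [hZ C hC hcone, ENNReal.eq_inv_of_mul_eq_one_left huniv.symm, dirichlet,
    Measure.map_apply measurable_snoc_one_sub_sum hC, Measure.smul_apply, smul_eq_mul]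
  rfl

lemma dirichlet_setOf_le_sum_mul (ha : ∀ i, 0 < a i) (f : Fin (m + 1) → ℝ) (μ : ℝ) :
    dirichlet m a {w | μ ≤ ∑ i, f i * w i} = gammaPi a {y | 0 ≤ ∑ i, (f i - μ) * y i} := by
  have hcone : ∀ s > (0 : ℝ), ∀ y : Fin (m + 1) → ℝ,
      s • y ∈ {y | 0 ≤ ∑ i, (f i - μ) * y i} ↔ y ∈ {y | 0 ≤ ∑ i, (f i - μ) * y i} := by
    intro s hs y
    simp only [mem_ofPred_eq, Pi.smul_apply, smul_eq_mul, mul_left_comm _ s, ← Finset.mul_sum,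
      mul_nonneg_iff_of_pos_left hs]
  rw [← dirichlet_apply_of_forall_smul_mem_iff ha (measurableSet_le measurable_const (by fun_prop))
    hcone, dirichlet, Measure.map_apply measurable_snoc_one_sub_sum (measurableSet_le (by fun_prop)
      (by fun_prop)), Measure.map_apply measurable_snoc_one_sub_sum (measurableSet_le (by fun_prop)
      (by fun_prop))]
  congr 1
  ext x
  simp only [mem_preimage, mem_ofPred_eq, sub_mul, Finset.sum_sub_distrib, ← Finset.mul_sum,
    sum_snoc_sub_sum, mul_one, sub_nonneg]

end DirichletGamma

section Cdf

variable {ν : Measure ℝ} [IsProbabilityMeasure ν]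

lemma hasDerivAt_cdf {g : ℝ → ℝ} (hg : Continuous g) (hg0 : ∀ v, 0 ≤ g v)
    (hν : ν = volume.withDensity fun v => ENNReal.ofReal (g v)) (a : ℝ) :
    HasDerivAt (cdf ν) (g a) a := by
  have hmass : ∫⁻ v, ENNReal.ofReal (g v) = 1 := by
    rw [← setLIntegral_univ, ← withDensity_apply _ MeasurableSet.univ, ← hν, measure_univ]
  have hint : Integrable g := by
    refine ⟨hg.aestronglyMeasurable, ?_⟩
    simp [hasFiniteIntegral_iff_ofReal (Eventually.of_forall hg0), hmass]
  have hIic (v : ℝ) : cdf ν v = ∫ t in Iic v, g t := by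
    rw [cdf_eq_real, Measure.real, hν, withDensity_apply _ measurableSet_Iic,
      ← ofReal_integral_eq_lintegral_ofReal hint.integrableOn (Eventually.of_forall hg0),
      ENNReal.toReal_ofReal (integral_nonneg hg0)]
  have hprim : cdf ν = fun v => (∫ t in a..v, g t) + cdf ν a := by
    ext v
    rw [hIic, hIic, ← intervalIntegral.integral_Iic_sub_Iic hint.integrableOn hint.integrableOn]
    ring
  rw [hprim]
  exact (intervalIntegral.integral_hasDerivAt_right (hg.intervalIntegrable _ _)
    hg.stronglyMeasurable.stronglyMeasurableAtFilter hg.continuousAt).add_const _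

lemma measure_Ici_eq_ofReal_one_sub_cdf [NullSingletonClass ν] (a : ℝ) :
    ν (Ici a) = ENNReal.ofReal (1 - cdf ν a) := by
  rw [measure_congr (Ioi_ae_eq_Ici (μ := ν)).symm, ← compl_Iic, cdf_eq_real,
    ← probReal_compl_eq_one_sub measurableSet_Iic, ofReal_measureReal]

lemma hasDerivAt_cdf_gaussianReal (a : ℝ) :
    HasDerivAt (cdf (gaussianReal 0 1)) (gaussianPDFReal 0 1 a) a := by
  refine hasDerivAt_cdf ?_ (gaussianPDFReal_nonneg 0 1) ?_ a
  · unfold gaussianPDFReal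
    fun_prop
  · rw [gaussianReal_of_var_ne_zero _ one_ne_zero]
    rfl

lemma cdf_gaussianReal_le_half {a : ℝ} (ha : a ≤ 0) : cdf (gaussianReal 0 1) a ≤ 1 / 2 := by
  have hsymm : gaussianReal 0 1 (Iic 0) = gaussianReal 0 1 (Ici 0) := by
    conv_lhs => rw [← neg_zero, ← gaussianReal_map_neg, Measure.map_apply measurable_neg
      measurableSet_Iic]
    simp
  have := nullSingletonClass_gaussianReal (μ := 0) (one_ne_zero (α := NNReal))
  rw [measure_Ici_eq_ofReal_one_sub_cdf, ← ofReal_cdf, ENNReal.ofReal_eq_ofReal_iff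
    (cdf_nonneg _ _) (sub_nonneg.2 (cdf_le_one _ _))] at hsymm
  linarith [monotone_cdf (gaussianReal 0 1) ha]

end Cdf

section TiltMeanSurjective

variable {ι : Type*} [Fintype ι] {α x : ι → ℝ} {j k : ι} {l : ℝ}

lemma tiltMean_zero : tiltMean α x 0 = ∑ i, α i * x i := by simp [tiltMean]

lemma tiltEntropy_zero : tiltEntropy α x 0 = 0 := by simp [tiltEntropy, expTiltEntropy_zero]

lemma tiltEntropy_le_mul_tiltMean_sub (hα : ∀ i, 0 < α i) (hl : ∀ i, l * x i < 1) :
    tiltEntropy α x l ≤ l * (tiltMean α x l - tiltMean α x 0) := by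
  rw [tiltEntropy_eq, tiltMean_zero, mul_sub, Finset.mul_sum, sub_eq_add_neg, add_le_add_iff_left,
    ← Finset.sum_neg_distrib]
  refine Finset.sum_le_sum fun i _ => ?_
  have hlog := mul_le_mul_of_nonneg_left (log_le_sub_one_of_pos (sub_pos.2 (hl i))) (hα i).le
  linarith

lemma tendsto_tiltEntropy_atTop {F : Filter ℝ} (hα : ∀ i, 0 < α i)
    (hF : ∀ᶠ l in F, ∀ i, l * x i < 1) (hk : Tendsto (fun l => l * x k) F (𝓝 1)) :
    Tendsto (tiltEntropy α x) F atTop := by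
  have hk' : Tendsto (fun l => l * x k) F (𝓝[<] 1) :=
    tendsto_nhdsWithin_iff.2 ⟨hk, hF.mono fun l hl => hl k⟩
  refine tendsto_atTop_mono' _ ?_ ((tendsto_expTiltEntropy_atTop.comp hk').const_mul_atTop (hα k))
  filter_upwards [hF] with l hl
  exact Finset.single_le_sum (f := fun i => α i * expTiltEntropy (l * x i))
    (fun i _ => mul_nonneg (hα i).le (expTiltEntropy_nonneg (hl i))) (Finset.mem_univ k)

namespace IsExtremalPair

lemma tendsto_tiltEntropy_nhdsLT (h : IsExtremalPair x j k) (hα : ∀ i, 0 < α i) :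
    Tendsto (tiltEntropy α x) (𝓝[<] (x k)⁻¹) atTop := by
  refine tendsto_tiltEntropy_atTop (k := k) hα
    (mem_of_superset h.Ioo_inv_mem_nhdsLT fun l hl => h.mul_lt_one hl) ?_
  simpa [h.pos_right.ne'] using
    ((continuous_mul_const (x k)).tendsto (x k)⁻¹).mono_left nhdsWithin_le_nhds

lemma tendsto_tiltEntropy_nhdsGT (h : IsExtremalPair x j k) (hα : ∀ i, 0 < α i) :
    Tendsto (tiltEntropy α x) (𝓝[>] (x j)⁻¹) atTop := by
  refine tendsto_tiltEntropy_atTop (k := j) hα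
    (mem_of_superset h.Ioo_inv_mem_nhdsGT fun l hl => h.mul_lt_one hl) ?_
  simpa [h.neg_left.ne] using
    ((continuous_mul_const (x j)).tendsto (x j)⁻¹).mono_left nhdsWithin_le_nhds

lemma tendsto_tiltMean_atTop (h : IsExtremalPair x j k) (hα : ∀ i, 0 < α i) :
    Tendsto (tiltMean α x) (𝓝[<] (x k)⁻¹) atTop := by
  refine tendsto_atTop_mono' _ ?_ (tendsto_atTop_add_const_left _ (tiltMean α x 0)
    ((h.tendsto_tiltEntropy_nhdsLT hα).const_mul_atTop h.pos_right))
  filter_upwards [h.Ioo_inv_mem_nhdsLT, Ioo_mem_nhdsLT h.zero_mem_Ioo.2] with l hl hl0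
  have hle := tiltEntropy_le_mul_tiltMean_sub hα (h.mul_lt_one hl)
  have hpos := (tiltEntropy_nonneg hα (h.mul_lt_one hl)).trans hle
  have hmul := mul_le_mul_of_nonneg_left hle h.pos_right.le
  have hone := mul_le_mul_of_nonneg_right (h.mul_lt_one hl k).le
    (nonneg_of_mul_nonneg_right hpos hl0.1)
  linarith

lemma tendsto_tiltMean_atBot (h : IsExtremalPair x j k) (hα : ∀ i, 0 < α i) :
    Tendsto (tiltMean α x) (𝓝[>] (x j)⁻¹) atBot := by
  refine tendsto_atBot_mono' _ ?_ (tendsto_atBot_add_const_left _ (tiltMean α x 0)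
    ((h.tendsto_tiltEntropy_nhdsGT hα).const_mul_atTop_of_neg h.neg_left))
  filter_upwards [h.Ioo_inv_mem_nhdsGT, Ioo_mem_nhdsGT h.zero_mem_Ioo.1] with l hl hl0
  have hle := tiltEntropy_le_mul_tiltMean_sub hα (h.mul_lt_one hl)
  have hneg := (tiltEntropy_nonneg hα (h.mul_lt_one hl)).trans hle
  have hmul := mul_le_mul_of_nonpos_left hle h.neg_left.le
  have hone := mul_le_mul_of_nonpos_right (h.mul_lt_one hl j).le
    (nonpos_of_mul_nonneg_right hneg hl0.2)
  linarith

lemma strictMonoOn_tiltMean (h : IsExtremalPair x j k) (hα : ∀ i, 0 < α i) :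
    StrictMonoOn (tiltMean α x) (Ioo (x j)⁻¹ (x k)⁻¹) := by
  refine strictMonoOn_of_hasDerivWithinAt_pos (f' := tiltVar α x) (convex_Ioo _ _)
    (fun l hl => (hasDerivAt_tiltMean (h.mul_lt_one hl)).continuousAt.continuousWithinAt)
    (fun l hl => (hasDerivAt_tiltMean (h.mul_lt_one (interior_subset hl))).hasDerivWithinAt)
    fun l hl => tiltVar_pos hα h.pos_right.ne' (h.mul_lt_one (interior_subset hl) k)

lemma surjOn_tiltMean (h : IsExtremalPair x j k) (hα : ∀ i, 0 < α i) :
    SurjOn (tiltMean α x) (Ioo (x j)⁻¹ (x k)⁻¹) univ :=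
  isPreconnected_Ioo.intermediate_value_Iii (le_principal_iff.2 h.Ioo_inv_mem_nhdsGT)
    (le_principal_iff.2 h.Ioo_inv_mem_nhdsLT)
    (fun _ hl => (hasDerivAt_tiltMean (h.mul_lt_one hl)).continuousAt.continuousWithinAt)
    (h.tendsto_tiltMean_atBot hα) (h.tendsto_tiltMean_atTop hα)

end IsExtremalPair

end TiltMeanSurjective

section TiltSignedRoot

variable {ι : Type*} [Fintype ι] {α x : ι → ℝ} {j k : ι} {l : ℝ}

/-- The signed root `sgn(l) √(2 H(l))` of the entropy of the tilt `l`, the Gaussian coordinate to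
which the saddle-point approximation at `tiltMean α x l` is compared. -/
def tiltSignedRoot (α x : ι → ℝ) (l : ℝ) : ℝ := Real.sign l * √(2 * tiltEntropy α x l)

lemma tiltSignedRoot_zero : tiltSignedRoot α x 0 = 0 := by simp [tiltSignedRoot]

lemma tiltSignedRoot_of_pos (hl : 0 < l) : tiltSignedRoot α x l = √(2 * tiltEntropy α x l) := by
  rw [tiltSignedRoot, sign_of_pos hl, one_mul]

lemma tiltSignedRoot_of_neg (hl : l < 0) : tiltSignedRoot α x l = -√(2 * tiltEntropy α x l) := by
  rw [tiltSignedRoot, sign_of_neg hl, neg_one_mul]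

lemma tiltSignedRoot_nonpos (hl : l ≤ 0) : tiltSignedRoot α x l ≤ 0 := by
  rcases hl.eq_or_lt with rfl | hl
  · rw [tiltSignedRoot_zero]
  · simp [tiltSignedRoot_of_neg hl]

lemma sq_tiltSignedRoot (hα : ∀ i, 0 < α i) (hl : ∀ i, l * x i < 1) :
    tiltSignedRoot α x l ^ 2 = 2 * tiltEntropy α x l := by
  have hsq : √(2 * tiltEntropy α x l) ^ 2 = 2 * tiltEntropy α x l :=
    sq_sqrt (mul_nonneg two_pos.le (tiltEntropy_nonneg hα hl))
  rcases lt_trichotomy l 0 with h | rfl | h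
  · rw [tiltSignedRoot_of_neg h, neg_sq, hsq]
  · simp [tiltSignedRoot_zero, tiltEntropy_zero]
  · rw [tiltSignedRoot_of_pos h, hsq]

lemma hasDerivAt_tiltSignedRoot (hα : ∀ i, 0 < α i) (hxk : x k ≠ 0) (hl : ∀ i, l * x i < 1)
    (hl0 : l ≠ 0) :
    HasDerivAt (tiltSignedRoot α x) (l * tiltVar α x l / tiltSignedRoot α x l) l := by
  have hpos := tiltEntropy_pos hα hxk hl hl0
  have hsqrt := ((hasDerivAt_tiltEntropy (α := α) hl).const_mul 2).sqrt (by positivity)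
  rw [mul_div_mul_left _ _ two_ne_zero] at hsqrt
  rcases hl0.lt_or_gt with h | h
  · rw [tiltSignedRoot_of_neg h, div_neg]
    exact hsqrt.neg.congr_of_eventuallyEq
      ((eventually_lt_nhds h).mono fun t ht => tiltSignedRoot_of_neg ht)
  · rw [tiltSignedRoot_of_pos h]
    exact hsqrt.congr_of_eventuallyEq
      ((eventually_gt_nhds h).mono fun t ht => tiltSignedRoot_of_pos ht)

lemma continuousAt_tiltSignedRoot (hα : ∀ i, 0 < α i) (hxk : x k ≠ 0) (hl : ∀ i, l * x i < 1) :
    ContinuousAt (tiltSignedRoot α x) l := by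
  rcases eq_or_ne l 0 with rfl | hl0
  · have hsqrt : Tendsto (fun l => √(2 * tiltEntropy α x l)) (𝓝 0) (𝓝 0) := by
      simpa [tiltEntropy_zero] using
        ((hasDerivAt_tiltEntropy (α := α) hl).continuousAt.const_mul 2).sqrt.tendsto
    rw [ContinuousAt, tiltSignedRoot_zero]
    refine squeeze_zero_norm (fun l => ?_) hsqrt
    rcases lt_trichotomy l 0 with h | rfl | h
    · rw [tiltSignedRoot_of_neg h, norm_neg, norm_of_nonneg (sqrt_nonneg _)]
    · simp [tiltSignedRoot_zero]
    · rw [tiltSignedRoot_of_pos h, norm_of_nonneg (sqrt_nonneg _)]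
  · exact (hasDerivAt_tiltSignedRoot hα hxk hl hl0).continuousAt

lemma gaussianPDFReal_tiltSignedRoot (hα : ∀ i, 0 < α i) (hl : ∀ i, l * x i < 1) :
    gaussianPDFReal 0 1 (tiltSignedRoot α x l) = exp (-tiltEntropy α x l) / √(2 * π) := by
  have hexp : -(2 * tiltEntropy α x l) / (2 * 1) = -tiltEntropy α x l := by ring
  rw [gaussianPDFReal, sub_zero, sq_tiltSignedRoot hα hl, NNReal.coe_one, mul_one, hexp,
    div_eq_inv_mul]

lemma IsExtremalPair.mul_sqrt_tiltVar_mul_le_tiltSignedRoot (h : IsExtremalPair x j k)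
    (hα : ∀ i, 0 < α i) (hl : l ∈ Ioo (x j)⁻¹ (x k)⁻¹) :
    l * √(tiltVar α x l) * (1 - l * x k) ≤ tiltSignedRoot α x l := by
  have hlx := h.mul_lt_one hl
  have hlk : 0 < 1 - l * x k := sub_pos.2 (hlx k)
  have hsq : (l * √(tiltVar α x l) * (1 - l * x k)) ^ 2
      = l ^ 2 * tiltVar α x l * (1 - l * x k) ^ 2 := by
    rw [mul_pow, mul_pow, sq_sqrt (tiltVar_pos hα h.pos_right.ne' (hlx k)).le]
  rcases lt_trichotomy l 0 with hl0 | rfl | hl0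
  · rw [tiltSignedRoot_of_neg hl0, le_neg]
    refine sqrt_le_iff.2 ⟨?_, ?_⟩
    · have := neg_pos.2 hl0
      rw [← neg_mul, ← neg_mul]
      positivity
    · rw [neg_sq, hsq]
      exact two_mul_tiltEntropy_le hα h.le_right h.pos_right hl0.le hlx
  · simp [tiltSignedRoot_zero]
  · rw [tiltSignedRoot_of_pos hl0]
    refine le_sqrt_of_sq_le (hsq.trans_le ?_)
    exact sq_mul_tiltVar_mul_sq_le hα h.le_right h.pos_right hl0.le (hlx k)

lemma saddlePointDensity_mul_tiltVar (hvar : 0 < tiltVar α x l) :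
    saddlePointDensity α x k l * tiltVar α x l
      = exp (-tiltEntropy α x l) / √(2 * π) * (√(tiltVar α x l) / (1 - l * x k)) := by
  conv_lhs => rw [saddlePointDensity, ← sq_sqrt hvar.le, sqrt_sq (sqrt_nonneg _)]
  have := sqrt_pos.2 hvar
  field_simp

lemma IsExtremalPair.gaussianPDFReal_mul_le_saddlePointDensity_mul (h : IsExtremalPair x j k)
    (hα : ∀ i, 0 < α i) (hl : l ∈ Ioo (x j)⁻¹ (x k)⁻¹) (hl0 : 0 < l) :
    gaussianPDFReal 0 1 (tiltSignedRoot α x l) * (l * tiltVar α x l / tiltSignedRoot α x l)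
      ≤ saddlePointDensity α x k l * tiltVar α x l := by
  have hlx := h.mul_lt_one hl
  have hvar := tiltVar_pos hα h.pos_right.ne' (hlx k)
  have hroot : 0 < tiltSignedRoot α x l := by
    have := tiltEntropy_pos hα h.pos_right.ne' hlx hl0.ne'
    rw [tiltSignedRoot_of_pos hl0]
    positivity
  rw [gaussianPDFReal_tiltSignedRoot hα hlx, saddlePointDensity_mul_tiltVar hvar]
  refine mul_le_mul_of_nonneg_left ?_ (by positivity)
  rw [div_le_div_iff₀ hroot (sub_pos.2 (hlx k))]
  have hmul := mul_le_mul_of_nonneg_left (h.mul_sqrt_tiltVar_mul_le_tiltSignedRoot hα hl)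
    (sqrt_nonneg (tiltVar α x l))
  linear_combination hmul - l * (1 - l * x k) * mul_self_sqrt hvar.le

lemma IsExtremalPair.saddlePointDensity_mul_le_gaussianPDFReal_mul (h : IsExtremalPair x j k)
    (hα : ∀ i, 0 < α i) (hl : l ∈ Ioo (x j)⁻¹ (x k)⁻¹) (hl0 : l < 0) :
    saddlePointDensity α x k l * tiltVar α x l
      ≤ gaussianPDFReal 0 1 (tiltSignedRoot α x l)
        * (l * tiltVar α x l / tiltSignedRoot α x l) := by
  have hlx := h.mul_lt_one hl
  have hvar := tiltVar_pos hα h.pos_right.ne' (hlx k)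
  have hroot : 0 < -tiltSignedRoot α x l := by
    have := tiltEntropy_pos hα h.pos_right.ne' hlx hl0.ne
    rw [tiltSignedRoot_of_neg hl0, neg_neg]
    positivity
  rw [gaussianPDFReal_tiltSignedRoot hα hlx, saddlePointDensity_mul_tiltVar hvar]
  refine mul_le_mul_of_nonneg_left ?_ (by positivity)
  rw [← neg_div_neg_eq (l * _), div_le_div_iff₀ (sub_pos.2 (hlx k)) hroot]
  have hmul := mul_le_mul_of_nonneg_left (h.mul_sqrt_tiltVar_mul_le_tiltSignedRoot hα hl)
    (sqrt_nonneg (tiltVar α x l))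
  linear_combination hmul - l * (1 - l * x k) * mul_self_sqrt hvar.le

end TiltSignedRoot

section GaussianComparison

variable {ι : Type*} [Fintype ι] {α x : ι → ℝ} {j k : ι} {l c : ℝ}
  {ν : Measure ℝ} {g : ℝ → ℝ}

namespace IsExtremalPair

lemma continuousOn_mul_cdf_sub_cdf (h : IsExtremalPair x j k) (hα : ∀ i, 0 < α i)
    (hν : ∀ v, HasDerivAt (cdf ν) (g v) v) :
    ContinuousOn (fun l => c * cdf (gaussianReal 0 1) (tiltSignedRoot α x l)
      - cdf ν (tiltMean α x l)) (Ioo (x j)⁻¹ (x k)⁻¹) := by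
  intro l hl
  have hroot := continuousAt_tiltSignedRoot hα h.pos_right.ne' (h.mul_lt_one hl)
  have hmean := (hasDerivAt_tiltMean (α := α) (h.mul_lt_one hl)).continuousAt
  exact ((continuousAt_const.mul ((hasDerivAt_cdf_gaussianReal _).continuousAt.comp' hroot)).sub
    ((hν _).continuousAt.comp' hmean)).continuousWithinAt

lemma hasDerivAt_mul_cdf_sub_cdf (h : IsExtremalPair x j k) (hα : ∀ i, 0 < α i)
    (hν : ∀ v, HasDerivAt (cdf ν) (g v) v) (hl : l ∈ Ioo (x j)⁻¹ (x k)⁻¹) (hl0 : l ≠ 0) :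
    HasDerivAt (fun l => c * cdf (gaussianReal 0 1) (tiltSignedRoot α x l)
        - cdf ν (tiltMean α x l))
      (c * (gaussianPDFReal 0 1 (tiltSignedRoot α x l)
          * (l * tiltVar α x l / tiltSignedRoot α x l))
        - g (tiltMean α x l) * tiltVar α x l) l :=
  (((hasDerivAt_cdf_gaussianReal _).comp l
    (hasDerivAt_tiltSignedRoot hα h.pos_right.ne' (h.mul_lt_one hl) hl0)).const_mul c).sub
    ((hν _).comp l (hasDerivAt_tiltMean (h.mul_lt_one hl)))

lemma antitoneOn_mul_cdf_sub_cdf (h : IsExtremalPair x j k) (hα : ∀ i, 0 < α i)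
    (hν : ∀ v, HasDerivAt (cdf ν) (g v) v) (hc : 0 ≤ c)
    (hg : ∀ l ∈ Ioo (x j)⁻¹ (x k)⁻¹, c * saddlePointDensity α x k l ≤ g (tiltMean α x l)) :
    AntitoneOn (fun l => c * cdf (gaussianReal 0 1) (tiltSignedRoot α x l)
      - cdf ν (tiltMean α x l)) (Ico 0 (x k)⁻¹) := by
  have hsub : Ico 0 (x k)⁻¹ ⊆ Ioo (x j)⁻¹ (x k)⁻¹ := Ico_subset_Ioo_left h.zero_mem_Ioo.1
  refine antitoneOn_of_hasDerivWithinAt_nonpos (convex_Ico _ _)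
    ((h.continuousOn_mul_cdf_sub_cdf hα hν).mono hsub) (fun l hl => (h.hasDerivAt_mul_cdf_sub_cdf hα
      hν (hsub (interior_subset hl)) ?_).hasDerivWithinAt) fun l hl => ?_
  · exact (interior_Ico (a := (0 : ℝ)) ▸ hl).1.ne'
  · have hl' := hsub (interior_subset hl)
    have hvar := tiltVar_pos hα h.pos_right.ne' (h.mul_lt_one hl' k)
    rw [interior_Ico] at hl
    have hgauss := mul_le_mul_of_nonneg_left
      (h.gaussianPDFReal_mul_le_saddlePointDensity_mul hα hl' hl.1) hc
    have hsaddle := mul_le_mul_of_nonneg_right (hg l hl') hvar.le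
    linarith

lemma monotoneOn_mul_cdf_sub_cdf (h : IsExtremalPair x j k) (hα : ∀ i, 0 < α i)
    (hν : ∀ v, HasDerivAt (cdf ν) (g v) v) (hc : 0 ≤ c)
    (hg : ∀ l ∈ Ioo (x j)⁻¹ (x k)⁻¹, g (tiltMean α x l) ≤ c * saddlePointDensity α x k l) :
    MonotoneOn (fun l => c * cdf (gaussianReal 0 1) (tiltSignedRoot α x l)
      - cdf ν (tiltMean α x l)) (Ioc (x j)⁻¹ 0) := by
  have hsub : Ioc (x j)⁻¹ 0 ⊆ Ioo (x j)⁻¹ (x k)⁻¹ := Ioc_subset_Ioo_right h.zero_mem_Ioo.2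
  refine monotoneOn_of_hasDerivWithinAt_nonneg (convex_Ioc _ _)
    ((h.continuousOn_mul_cdf_sub_cdf hα hν).mono hsub) (fun l hl => (h.hasDerivAt_mul_cdf_sub_cdf hα
      hν (hsub (interior_subset hl)) ?_).hasDerivWithinAt) fun l hl => ?_
  · exact (interior_Ioc (b := (0 : ℝ)) ▸ hl).2.ne
  · have hl' := hsub (interior_subset hl)
    have hvar := tiltVar_pos hα h.pos_right.ne' (h.mul_lt_one hl' k)
    rw [interior_Ioc] at hl
    have hgauss := mul_le_mul_of_nonneg_left
      (h.saddlePointDensity_mul_le_gaussianPDFReal_mul hα hl' hl.2) hc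
    have hsaddle := mul_le_mul_of_nonneg_right (hg l hl') hvar.le
    linarith

lemma mul_one_sub_cdf_le_one_sub_cdf (h : IsExtremalPair x j k) (hα : ∀ i, 0 < α i)
    (hν : ∀ v, HasDerivAt (cdf ν) (g v) v) (hc : 0 ≤ c)
    (hg : ∀ l ∈ Ioo (x j)⁻¹ (x k)⁻¹, c * saddlePointDensity α x k l ≤ g (tiltMean α x l))
    (hl : l ∈ Ico 0 (x k)⁻¹) :
    c * (1 - cdf (gaussianReal 0 1) (tiltSignedRoot α x l)) ≤ 1 - cdf ν (tiltMean α x l) := by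
  have hroot : Tendsto (tiltSignedRoot α x) (𝓝[<] (x k)⁻¹) atTop := by
    refine ((tendsto_sqrt_atTop.comp
      ((h.tendsto_tiltEntropy_nhdsLT hα).const_mul_atTop two_pos))).congr' ?_
    filter_upwards [Ioo_mem_nhdsLT h.zero_mem_Ioo.2] with t ht
    exact (tiltSignedRoot_of_pos ht.1).symm
  have hlim := (((tendsto_cdf_atTop (gaussianReal 0 1)).comp hroot).const_mul c).sub
    ((tendsto_cdf_atTop ν).comp (h.tendsto_tiltMean_atTop hα))
  have hle : c * 1 - 1 ≤ c * cdf (gaussianReal 0 1) (tiltSignedRoot α x l)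
      - cdf ν (tiltMean α x l) := by
    refine le_of_tendsto hlim ?_
    filter_upwards [Ioo_mem_nhdsLT hl.2] with t ht
    exact h.antitoneOn_mul_cdf_sub_cdf hα hν hc hg hl ⟨hl.1.trans ht.1.le, ht.2⟩ ht.1.le
  linarith

lemma cdf_le_mul_cdf (h : IsExtremalPair x j k) (hα : ∀ i, 0 < α i)
    (hν : ∀ v, HasDerivAt (cdf ν) (g v) v) (hc : 0 ≤ c)
    (hg : ∀ l ∈ Ioo (x j)⁻¹ (x k)⁻¹, g (tiltMean α x l) ≤ c * saddlePointDensity α x k l)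
    (hl : l ∈ Ioc (x j)⁻¹ 0) :
    cdf ν (tiltMean α x l) ≤ c * cdf (gaussianReal 0 1) (tiltSignedRoot α x l) := by
  have hroot : Tendsto (tiltSignedRoot α x) (𝓝[>] (x j)⁻¹) atBot := by
    refine (tendsto_neg_atTop_atBot.comp (tendsto_sqrt_atTop.comp
      ((h.tendsto_tiltEntropy_nhdsGT hα).const_mul_atTop two_pos))).congr' ?_
    filter_upwards [Ioo_mem_nhdsGT h.zero_mem_Ioo.1] with t ht
    exact (tiltSignedRoot_of_neg ht.2).symm
  have hlim := (((tendsto_cdf_atBot (gaussianReal 0 1)).comp hroot).const_mul c).sub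
    ((tendsto_cdf_atBot ν).comp (h.tendsto_tiltMean_atBot hα))
  have hle : c * 0 - 0 ≤ c * cdf (gaussianReal 0 1) (tiltSignedRoot α x l)
      - cdf ν (tiltMean α x l) := by
    refine le_of_tendsto hlim ?_
    filter_upwards [Ioo_mem_nhdsGT hl.1] with t ht
    exact h.monotoneOn_mul_cdf_sub_cdf hα hν hc hg ⟨ht.1, ht.2.le.trans hl.2⟩ hl ht.2.le
  linarith

lemma one_sub_mul_one_sub_cdf_le_one_sub_cdf {ε : ℝ} (h : IsExtremalPair x j k)
    (hα : ∀ i, 0 < α i) (hε : ε ∈ Ioo (0 : ℝ) 1) (hν : ∀ v, HasDerivAt (cdf ν) (g v) v)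
    (hg : ∀ l ∈ Ioo (x j)⁻¹ (x k)⁻¹, |g (tiltMean α x l) - saddlePointDensity α x k l|
      ≤ ε * saddlePointDensity α x k l)
    (hl : l ∈ Ioo (x j)⁻¹ (x k)⁻¹) :
    (1 - ε) * (1 - cdf (gaussianReal 0 1) (tiltSignedRoot α x l))
      ≤ 1 - cdf ν (tiltMean α x l) := by
  rcases le_total 0 l with hl0 | hl0
  · refine h.mul_one_sub_cdf_le_one_sub_cdf hα hν (sub_nonneg.2 hε.2.le) (fun t ht => ?_)
      ⟨hl0, hl.2⟩
    linarith [(abs_le.1 (hg t ht)).1]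
  · have hle := h.cdf_le_mul_cdf hα hν (c := 1 + ε) (by linarith [hε.1])
      (fun t ht => by linarith [(abs_le.1 (hg t ht)).2]) ⟨hl.1, hl0⟩
    have hhalf := mul_le_mul_of_nonneg_left
      (cdf_gaussianReal_le_half (tiltSignedRoot_nonpos (α := α) (x := x) hl0)) hε.1.le
    linarith

end IsExtremalPair

end GaussianComparison

section GammaTail

variable {ι : Type*} [Fintype ι] [DecidableEq ι] {α x : ι → ℝ} {j k : ι} {l ε : ℝ}

lemma IsExtremalPair.mul_gaussianReal_Ici_le_gammaPi (h : IsExtremalPair x j k)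
    (hα : ∀ i, 0 < α i) (hε : ε ∈ Ioo (0 : ℝ) 1) (hj : 72 * π / ε ^ 2 ≤ α j)
    (hk : 72 * π / ε ^ 2 ≤ α k) (hl : l ∈ Ioo (x j)⁻¹ (x k)⁻¹) :
    ENNReal.ofReal (1 - ε) * gaussianReal 0 1 (Ici (tiltSignedRoot α x l))
      ≤ gammaPi (Function.update α k (α k + 1)) {y | tiltMean α x l ≤ ∑ i, x i * y i} := by
  have ha := update_add_one_pos (k := k) hα
  have hak : 1 < Function.update α k (α k + 1) k := by simpa using hα k
  have hsum : Measurable fun y : ι → ℝ => ∑ i, x i * y i := by fun_prop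
  have hlaw := map_sum_gammaPi ha hak h.pos_right
  have := isProbabilityMeasure_gammaPi ha
  set ν := (gammaPi (Function.update α k (α k + 1))).map fun y => ∑ i, x i * y i
  have : IsProbabilityMeasure ν := Measure.isProbabilityMeasure_map hsum.aemeasurable
  have : NullSingletonClass ν :=
    ⟨fun v => hlaw ▸ withDensity_absolutelyContinuous _ _ (measure_singleton v)⟩
  have := nullSingletonClass_gaussianReal (μ := 0) (one_ne_zero (α := NNReal))
  have htail : gammaPi (Function.update α k (α k + 1)) {y | tiltMean α x l ≤ ∑ i, x i * y i}
      = ν (Ici (tiltMean α x l)) := (Measure.map_apply hsum measurableSet_Ici).symm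
  rw [htail, measure_Ici_eq_ofReal_one_sub_cdf, measure_Ici_eq_ofReal_one_sub_cdf,
    ← ENNReal.ofReal_mul (sub_nonneg.2 hε.2.le)]
  refine ENNReal.ofReal_le_ofReal (h.one_sub_mul_one_sub_cdf_le_one_sub_cdf hα hε
    (hasDerivAt_cdf (continuous_linearFormDensity ha hak h.pos_right)
      (linearFormDensity_nonneg (ha k) h.pos_right) hlaw) (fun t ht => ?_) hl)
  exact abs_linearFormDensity_sub_saddlePointDensity_le h hα hε hj hk ht

end GammaTail

lemma IsExtremalPair.sign_neg_tiltMean_zero {ι : Type*} [Fintype ι] {α x : ι → ℝ} {j k : ι} {l : ℝ}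
    (h : IsExtremalPair x j k) (hα : ∀ i, 0 < α i) (hl : l ∈ Ioo (x j)⁻¹ (x k)⁻¹)
    (hmean : tiltMean α x l = 0) : Real.sign (-tiltMean α x 0) = Real.sign l := by
  have hmono := h.strictMonoOn_tiltMean hα
  rcases lt_trichotomy l 0 with hl0 | rfl | hl0
  · have hpos := hmono hl h.zero_mem_Ioo hl0
    rw [hmean] at hpos
    rw [sign_of_neg hl0, sign_of_neg (neg_neg_of_pos hpos)]
  · rw [hmean, neg_zero]
  · have hneg := hmono h.zero_mem_Ioo hl hl0
    rw [hmean] at hneg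
    rw [sign_of_pos hl0, sign_of_pos (neg_pos.2 hneg)]

section KinfstarDuality

variable {m : ℕ} {p q f x : Fin (m + 1) → ℝ} {l μ : ℝ}

lemma sum_mul_log_one_sub_mul_le_klReal (hp : p ∈ stdSimplex ℝ (Fin (m + 1)))
    (hq : q ∈ stdSimplex ℝ (Fin (m + 1))) (hqp : ∀ i, q i = 0 → p i = 0)
    (hqx : ∑ i, x i * q i = 0) (hl : ∀ i, l * x i < 1) :
    ∑ i, p i * log (1 - l * x i) ≤ klReal p q := by
  have hterm (i) : p i * log (1 - l * x i) - (q i * (1 - l * x i) - p i)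
      ≤ if p i = 0 then 0 else p i * log (p i / q i) := by
    have hli : 0 < 1 - l * x i := sub_pos.2 (hl i)
    split_ifs with hpi
    · simpa [hpi] using mul_nonneg (hq.1 i) hli.le
    have hpi0 : 0 < p i := (hp.1 i).lt_of_ne' hpi
    have hqi0 : 0 < q i := (hq.1 i).lt_of_ne' (mt (hqp i) hpi)
    have hlog := mul_le_mul_of_nonneg_left
      (log_le_sub_one_of_pos (div_pos (mul_pos hqi0 hli) hpi0)) hpi0.le
    rw [log_div (mul_pos hqi0 hli).ne' hpi, log_mul hqi0.ne' hli.ne', mul_sub (p i) _ 1,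
      mul_div_cancel₀ _ hpi] at hlog
    rw [log_div hpi hqi0.ne']
    linarith
  have hmass : ∑ i, (q i * (1 - l * x i) - p i) = 0 := by
    have hexpand (i) : q i * (1 - l * x i) - p i = q i - l * (x i * q i) - p i := by ring
    simp_rw [hexpand, Finset.sum_sub_distrib, ← Finset.mul_sum, hqx, hq.2, hp.2]
    ring
  have hsum := Finset.sum_le_sum fun i (_ : i ∈ Finset.univ) => hterm i
  rwa [Finset.sum_sub_distrib, hmass, sub_zero] at hsum

lemma klReal_div_one_sub_mul : klReal p (fun i => p i / (1 - l * x i))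
    = ∑ i, p i * log (1 - l * x i) := by
  refine Finset.sum_congr rfl fun i _ => ?_
  split_ifs with hpi
  · rw [hpi, zero_mul]
  · rw [div_div_cancel₀ hpi]

lemma div_one_sub_mul_mem_stdSimplex (hp : p ∈ stdSimplex ℝ (Fin (m + 1)))
    (hl : ∀ i, l * x i < 1) (hmean : tiltMean p x l = 0) :
    (fun i => p i / (1 - l * x i)) ∈ stdSimplex ℝ (Fin (m + 1)) := by
  refine ⟨fun i => div_nonneg (hp.1 i) (sub_pos.2 (hl i)).le, ?_⟩
  have hsplit (i) : p i / (1 - l * x i) = p i + l * (p i * (x i / (1 - l * x i))) := by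
    have := (sub_pos.2 (hl i)).ne'
    field_simp
    ring
  simp_rw [hsplit, Finset.sum_add_distrib, ← Finset.mul_sum]
  rw [hp.2, ← tiltMean, hmean, mul_zero, add_zero]

lemma sum_sub_mul_of_mem_stdSimplex (hq : q ∈ stdSimplex ℝ (Fin (m + 1))) :
    ∑ i, (f i - μ) * q i = ∑ i, f i * q i - μ := by
  simp_rw [sub_mul, Finset.sum_sub_distrib, ← Finset.mul_sum, hq.2, mul_one]

-- The minimizer is `q i = p i / (1 - l * (f i - μ))`, with `l` the Lagrange multiplier.
lemma Kinfstar_eq_tiltEntropy (hp : p ∈ stdSimplex ℝ (Fin (m + 1)))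
    (hl : ∀ i, l * (f i - μ) < 1) (hmean : tiltMean p (fun i => f i - μ) l = 0) :
    Kinfstar p μ f = tiltEntropy p (fun i => f i - μ) l := by
  rw [tiltEntropy_eq, hmean, mul_zero, zero_add]
  have hq := div_one_sub_mul_mem_stdSimplex hp hl hmean
  refine IsLeast.csInf_eq ⟨⟨_, hq, fun i hi => ?_, ?_, klReal_div_one_sub_mul.symm⟩, ?_⟩
  · exact (div_eq_zero_iff.1 hi).resolve_right (sub_pos.2 (hl i)).ne'
  · rw [← sub_eq_zero, ← sum_sub_mul_of_mem_stdSimplex hq, ← hmean]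
    exact Finset.sum_congr rfl fun i _ => by ring
  · rintro _ ⟨q, hq, hqp, hqf, rfl⟩
    refine sum_mul_log_one_sub_mul_le_klReal hp hq hqp ?_ hl
    rw [sum_sub_mul_of_mem_stdSimplex hq, hqf, sub_self]

variable {α : Fin (m + 1) → ℝ} {j k : Fin (m + 1)}

lemma div_sum_mem_stdSimplex (hα : ∀ i, 0 < α i) :
    (fun ℓ => α ℓ / ∑ j, α j) ∈ stdSimplex ℝ (Fin (m + 1)) := by
  have hsum : 0 < ∑ j, α j := Finset.sum_pos (fun i _ => hα i) Finset.univ_nonempty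
  refine ⟨fun i => div_nonneg (hα i).le hsum.le, ?_⟩
  rw [← Finset.sum_div, div_self hsum.ne']

lemma IsExtremalPair.sqrt_sum_mul_Afun (h : IsExtremalPair (fun i => f i - μ) j k)
    (hα : ∀ i, 0 < α i) (hl : l ∈ Ioo (f j - μ)⁻¹ (f k - μ)⁻¹)
    (hmean : tiltMean α (fun i => f i - μ) l = 0) :
    √(∑ j, α j) * Afun (fun ℓ => α ℓ / ∑ j, α j) μ f = tiltSignedRoot α (fun i => f i - μ) l := by
  have hsum : 0 < ∑ j, α j := Finset.sum_pos (fun i _ => hα i) Finset.univ_nonempty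
  set p : Fin (m + 1) → ℝ := fun ℓ => α ℓ / ∑ j, α j with hp_def
  have hp : p ∈ stdSimplex ℝ (Fin (m + 1)) := div_sum_mem_stdSimplex hα
  have hp_pos (i) : 0 < p i := div_pos (hα i) hsum
  have hpmean : tiltMean p (fun i => f i - μ) l = 0 := by
    simp only [tiltMean, hp_def, div_mul_eq_mul_div, ← Finset.sum_div]
    rw [← tiltMean, hmean, zero_div]
  have hentropy : (∑ j, α j) * tiltEntropy p (fun i => f i - μ) l
      = tiltEntropy α (fun i => f i - μ) l := by
    simp only [tiltEntropy, hp_def, div_mul_eq_mul_div, ← Finset.sum_div]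
    rw [mul_div_cancel₀ _ hsum.ne']
  have hsign : Real.sign (μ - ∑ ℓ, f ℓ * p ℓ) = Real.sign l := by
    rw [← h.sign_neg_tiltMean_zero hp_pos hl hpmean, tiltMean_zero, ← neg_sub,
      ← sum_sub_mul_of_mem_stdSimplex hp]
    simp only [mul_comm]
  rw [Afun, hsign, Kinfstar_eq_tiltEntropy hp (h.mul_lt_one hl) hpmean, tiltSignedRoot,
    ← hentropy, mul_left_comm, ← sqrt_mul hsum.le, mul_left_comm (2 : ℝ)]

end KinfstarDuality

lemma seventy_two_mul_pi_le_c0 : 72 * π ≤ c0 := by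
  have hsqrt : (2.4 : ℝ) ≤ √6 := le_sqrt_of_sq_le (by norm_num)
  have hbase : (18.9 : ℝ) ≤ 8 + 49 * √6 / 9 := by linarith
  rw [c0, div_mul_eq_mul_div, le_div_iff₀ pi_pos]
  nlinarith [hbase, pi_pos, pi_lt_d2]

theorem dirichlet_crossing_lower_all_thresholds_general
    (m : ℕ) (j k : Fin (m + 1)) (f : Fin (m + 1) → ℝ) (hf : ∀ i, f i ∈ Set.Icc (f j) (f k))
    (α : Fin (m + 1) → ℝ) (hα : ∀ i, 0 < α i)
    (ε : ℝ) (hε : ε ∈ Set.Ioo (0 : ℝ) 1)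
    (hmin : 72 * π / ε ^ 2 ≤ min (α j) (α k))
    (μ : ℝ) (hμ : μ ∈ Set.Ioo (f j) (f k)) :
    ENNReal.ofReal (1 - ε) *
        gaussianReal 0 1
          {x | Real.sqrt (∑ j, α j) * Afun (fun ℓ => α ℓ / ∑ j, α j) μ f ≤ x}
      ≤ dirichlet m (Function.update α k (α k + 1))
          {w | μ ≤ ∑ ℓ, f ℓ * w ℓ} := by
  have hx : IsExtremalPair (fun i => f i - μ) j k :=
    { neg_left := sub_neg.2 hμ.1
      pos_right := sub_pos.2 hμ.2
      left_le i := sub_le_sub_right (hf i).1 μ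
      le_right i := sub_le_sub_right (hf i).2 μ }
  obtain ⟨l, hl, hmean⟩ := hx.surjOn_tiltMean hα (mem_univ 0)
  obtain ⟨hj, hk⟩ := le_min_iff.1 hmin
  have htail := hx.mul_gaussianReal_Ici_le_gammaPi hα hε hj hk hl
  rwa [hmean, ← dirichlet_setOf_le_sum_mul (update_add_one_pos hα),
    ← hx.sqrt_sum_mul_Afun hα hl hmean] at htail

/-- **Lower bound on Dirichlet boundary-crossing probabilities, all thresholds**
(Corollary 1, lower bound). -/
theorem dirichlet_crossing_lower_all_thresholds
    (m : ℕ) (hm : 1 ≤ m) (b : ℝ) (hb : 0 < b)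
    (f : Fin (m + 1) → ℝ) (hf : ∀ i, f i ∈ Set.Icc (0 : ℝ) b)
    (hf0 : f 0 = 0) (hfm : f (Fin.last m) = b)
    (α : Fin (m + 1) → ℝ) (hα : ∀ i, 0 < α i)
    (ε : ℝ) (hε : ε ∈ Set.Ioo (0 : ℝ) 1)
    (hmin : c0 / ε ^ 2 ≤ min (α 0) (α (Fin.last m)))
    (μ : ℝ) (hμ : μ ∈ Set.Ioo (0 : ℝ) b) :
    ENNReal.ofReal (1 - ε) *
        gaussianReal 0 1
          {x | Real.sqrt (∑ j, α j) * Afun (fun ℓ => α ℓ / ∑ j, α j) μ f ≤ x}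
      ≤ dirichlet m (Function.update α (Fin.last m) (α (Fin.last m) + 1))
          {w | μ ≤ ∑ ℓ, f ℓ * w ℓ} :=
  dirichlet_crossing_lower_all_thresholds_general m 0 (Fin.last m) f (by rwa [hf0, hfm]) α hα ε hε
    ((div_le_div_of_nonneg_right seventy_two_mul_pi_le_c0 (sq_nonneg ε)).trans hmin) μ
    (by rwa [hf0, hfm])

end
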